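/- Let (R, m) be a complete Noetherian local ring, M a finitely generated R-module of dimension d, and x = x_1, ..., x_d a sequence of d elements of R. Suppose 0 = ⋂_{p ∈ Ass M} N(p) is a reduced primary decomposition of the zero submodule of M, where each N(p) is a p-primary submodule of M (i.e. Ass(M/N(p)) = {p}). Then ⋂_{n ≥ 1} (x_1^n, ..., x_d^n)^lim_M = ⋂_{p ∈ J} N(p), where J = {p ∈ Ass M : the image of x is a system of parameters of R/p}. -/

import Mathlib

/-!
Let `J` be the set of associated primes `p` of `M` such that `x` is a system of parameters of `R/p`.
An element `u` lies in the limit closure of `x₁^n, …, x_d^n` as soon as the class of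
`u / (x₁⋯x_d)^n` in the top local cohomology `H^d_{(x)}(M)` vanishes.

**The intersection of components lies in every limit closure.** The submodule
`K = ⋂_{p ∈ J} N(p)` has no associated prime in `J`, and the top local cohomology of `K` vanishes:
by dévissage this is the Hartshorne–Lichtenbaum theorem for the domains `R/q` of which `x` is not a
system of parameters. Let `P ≠ m` be a prime containing `q` and `x`. By induction on the number of
parameters, the top local cohomology of `R/(q + x₁R)`, and with it the `x₁`-torsion of that of
`R/q`, is killed by some `c ∉ P`. The top local cohomology of `R/q` is Artinian by Melkersson's
criterion, so that its Matlis dual over the complete ring `R` is finitely generated, and the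
Cayley–Hamilton theorem for this dual yields an annihilator `c^n - x₁r ∉ P`. Multiplication by a
nonzero element of `R/q` being surjective on the top local cohomology, the latter vanishes.

**The intersection of the limit closures lies in `N(p)` for `p ∈ J`.** Passing to `M / N(p)`, it
suffices that an element `u` of all limit closures is killed by an element outside `p`, which is
proved by induction on the number of parameters. The Čech complex has Artinian homology, so the
images of the powers of `x₁` on it stabilize, and for some `j₀` and all `j ≥ j₀` the image of
`x₁^{j₀} u` in `M / x₁^j M` lies in all limit closures for `x₂, …, x_d`. By induction it vanishes
locally at a prime `q'` containing `p + x₁R` with `dim R/q' = d - 1`. Krull's intersection theorem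
shows that `x₁^{j₀} u` vanishes locally at `q'`, hence at `p`, and `x₁ ∉ p`.
-/

open IsLocalRing

/-- The limit closure `(x)^lim_M = ⋃_{n>0} ((x₁^{n+1}, …, x_r^{n+1})M :_M (x₁⋯x_r)^n)` of a
sequence `x = x₁, …, x_r` of elements of `R` in the module `M`; the union of the increasing
family of submodules is expressed as a supremum. -/
def limitClosure {R : Type*} [CommRing R] {M : Type*} [AddCommGroup M] [Module R M]
    {r : ℕ} (x : Fin r → R) : Submodule R M :=
  ⨆ n : ℕ, (Ideal.span (Set.range fun i => x i ^ (n + 2)) • (⊤ : Submodule R M)).comap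
    (LinearMap.lsmul R M ((∏ i, x i) ^ (n + 1)))

/-- The dimension of a module `M`: the Krull dimension of `R ⧸ Ann M`. -/
noncomputable def moduleDim (R M : Type*) [CommRing R] [AddCommGroup M] [Module R M] :
    WithBot ℕ∞ :=
  ringKrullDim (R ⧸ Module.annihilator R M)

namespace LimitClosure

universe u v w

/-! ### Fractions and the cokernel of the localization map -/

section Fractions

variable {R : Type u} [CommRing R] (y : R) {Z Z' Z'' : Type u} [AddCommGroup Z] [Module R Z]
  [AddCommGroup Z'] [Module R Z'] [AddCommGroup Z''] [Module R Z'']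

/-- The map `z ↦ z / y ^ n` from `Z` to the localization `Z_y`. -/
noncomputable def fraction (n : ℕ) : Z →ₗ[R] LocalizedModule.Away y Z :=
  LocalizedModule.divBy ⟨y ^ n, n, rfl⟩ ∘ₗ LocalizedModule.mkLinearMap (Submonoid.powers y) Z

theorem fraction_eq_mk (n : ℕ) (z : Z) :
    fraction y n z = LocalizedModule.mk z (⟨y ^ n, n, rfl⟩ : Submonoid.powers y) := by
  simp only [fraction, LinearMap.comp_apply, LocalizedModule.mkLinearMap_apply,
    LocalizedModule.divBy_apply, LocalizedModule.liftOn_mk, one_mul]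

theorem exists_fraction_eq (w : LocalizedModule.Away y Z) : ∃ n z, fraction y n z = w := by
  induction w using LocalizedModule.induction_on with
  | h z s =>
    obtain ⟨_, n, rfl⟩ := s
    exact ⟨n, z, fraction_eq_mk y n z⟩

theorem exists_pow_smul_eq_zero_of_fraction_eq_zero {n : ℕ} {z : Z} (h : fraction y n z = 0) :
    ∃ k, y ^ k • z = 0 := by
  rw [fraction_eq_mk, ← LocalizedModule.zero_mk 1, LocalizedModule.mk_eq] at h
  obtain ⟨⟨s, k, hk⟩, h⟩ := h
  exact ⟨k, by simpa [Submonoid.smul_def, ← hk] using h⟩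

theorem pow_smul_fraction_add (n k : ℕ) (z : Z) :
    y ^ k • fraction y (n + k) z = fraction y n z := by
  rw [fraction_eq_mk, fraction_eq_mk, LocalizedModule.smul'_mk, LocalizedModule.mk_eq]
  exact ⟨1, by simp only [one_smul, Submonoid.smul_def, smul_smul, ← pow_add]⟩

theorem fraction_add_pow_smul (n k : ℕ) (z : Z) :
    fraction y (n + k) (y ^ k • z) = fraction y n z := by
  rw [map_smul, pow_smul_fraction_add]

theorem pow_smul_fraction (n : ℕ) (z : Z) : y ^ n • fraction y n z = fraction y 0 z := by
  simpa using pow_smul_fraction_add y 0 n z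

theorem smul_fraction_one (z : Z) : y • fraction y 1 z = fraction y 0 z := by
  simpa using pow_smul_fraction y 1 z

theorem away_smul_injective : Function.Injective fun w : LocalizedModule.Away y Z => y • w :=
  IsLocalizedModule.smul_injective (LocalizedModule.mkLinearMap (Submonoid.powers y) Z)
    ⟨y, Submonoid.mem_powers y⟩

/-- The map `Z_y → Z'_y` induced by a linear map `Z → Z'`. -/
noncomputable def awayMap (f : Z →ₗ[R] Z') :
    LocalizedModule.Away y Z →ₗ[R] LocalizedModule.Away y Z' :=
  IsLocalizedModule.map (Submonoid.powers y) (LocalizedModule.mkLinearMap _ Z)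
    (LocalizedModule.mkLinearMap _ Z') f

@[simp]
theorem awayMap_fraction (f : Z →ₗ[R] Z') (n : ℕ) (z : Z) :
    awayMap y f (fraction y n z) = fraction y n (f z) := by
  rw [fraction_eq_mk, fraction_eq_mk, awayMap, IsLocalizedModule.map_LocalizedModules]

theorem awayMap_injective {f : Z →ₗ[R] Z'} (hf : Function.Injective f) :
    Function.Injective (awayMap y f) :=
  IsLocalizedModule.map_injective _ _ _ f hf

theorem awayMap_surjective {f : Z →ₗ[R] Z'} (hf : Function.Surjective f) :
    Function.Surjective (awayMap y f) :=
  IsLocalizedModule.map_surjective _ _ _ f hf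

theorem awayMap_exact {f : Z →ₗ[R] Z'} {g : Z' →ₗ[R] Z''} (h : Function.Exact f g) :
    Function.Exact (awayMap y f) (awayMap y g) :=
  IsLocalizedModule.map_exact _ _ _ _ f g h

variable (Z) in
/-- The cokernel `Z_y / im Z` of the localization map, i.e. the first local cohomology module of `Z`
with support in `yR`. -/
abbrev AwayQuot : Type u :=
  LocalizedModule.Away y Z ⧸ LinearMap.range (fraction y 0 : Z →ₗ[R] LocalizedModule.Away y Z)

namespace AwayQuot

/-- The class of `z / y ^ n` in `Z_y / im Z`. -/
noncomputable def mk (n : ℕ) : Z →ₗ[R] AwayQuot y Z := Submodule.mkQ _ ∘ₗ fraction y n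

theorem exists_mk_eq (w : AwayQuot y Z) : ∃ n z, mk y n z = w := by
  obtain ⟨w, rfl⟩ := Submodule.mkQ_surjective _ w
  obtain ⟨n, z, rfl⟩ := exists_fraction_eq y w
  exact ⟨n, z, rfl⟩

theorem mk_zero (z : Z) : mk y 0 z = 0 :=
  (Submodule.Quotient.mk_eq_zero _).2 ⟨z, rfl⟩

theorem exists_pow_smul_eq_of_mk_eq_zero {n : ℕ} {z : Z} (h : mk y n z = 0) :
    ∃ k z', y ^ k • z = y ^ (n + k) • z' := by
  obtain ⟨z', h⟩ := (Submodule.Quotient.mk_eq_zero _).1 h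
  have hz : fraction y n (y ^ n • z' - z) = 0 := by
    rw [map_sub, map_smul, pow_smul_fraction, h, sub_self]
  obtain ⟨k, hk⟩ := exists_pow_smul_eq_zero_of_fraction_eq_zero y hz
  rw [smul_sub, sub_eq_zero, smul_smul] at hk
  exact ⟨k, z', by rw [← hk, pow_add, mul_comm]⟩

theorem pow_smul_mk_add (n k : ℕ) (z : Z) : y ^ k • mk y (n + k) z = mk y n z := by
  rw [mk, LinearMap.comp_apply, ← map_smul, pow_smul_fraction_add]; rfl

theorem mk_add_pow_smul (n k : ℕ) (z : Z) : mk y (n + k) (y ^ k • z) = mk y n z := by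
  rw [map_smul, pow_smul_mk_add]

theorem pow_smul_mk (n : ℕ) (z : Z) : y ^ n • mk y n z = 0 := by
  simpa [mk_zero] using pow_smul_mk_add y 0 n z

theorem exists_pow_smul_eq_zero (w : AwayQuot y Z) : ∃ n, y ^ n • w = 0 := by
  obtain ⟨n, z, rfl⟩ := exists_mk_eq y w
  exact ⟨n, pow_smul_mk y n z⟩

theorem exists_mk_one_eq_of_smul_eq_zero {w : AwayQuot y Z} (h : y • w = 0) :
    ∃ z, mk y 1 z = w := by
  obtain ⟨w, rfl⟩ := Submodule.mkQ_surjective _ w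
  rw [← map_smul, Submodule.mkQ_apply, Submodule.Quotient.mk_eq_zero] at h
  obtain ⟨z, hz⟩ := h
  have hzw : fraction y 1 z = w := away_smul_injective y (by simp only [smul_fraction_one, hz])
  exact ⟨z, congrArg (Submodule.mkQ _) hzw⟩

theorem subsingleton_of_isUnit (hy : IsUnit y) : Subsingleton (AwayQuot y Z) := by
  refine subsingleton_of_forall_eq 0 fun w => ?_
  obtain ⟨n, hn⟩ := exists_pow_smul_eq_zero y w
  exact (hy.pow n).smul_eq_zero.1 hn

theorem subsingleton_of_forall_smul_eq_zero (hy : ∀ z : Z, y • z = 0) :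
    Subsingleton (AwayQuot y Z) := by
  refine subsingleton_of_forall_eq 0 fun w => ?_
  obtain ⟨n, z, rfl⟩ := exists_mk_eq y w
  rw [← mk_add_pow_smul y n 1, pow_one, hy, map_zero]

/-- The map `Z_y / im Z → Z'_y / im Z'` induced by a linear map `Z → Z'`. -/
noncomputable def map (f : Z →ₗ[R] Z') : AwayQuot y Z →ₗ[R] AwayQuot y Z' :=
  Submodule.mapQ _ _ (awayMap y f) <| by
    rintro _ ⟨z, rfl⟩
    exact ⟨f z, (awayMap_fraction y f 0 z).symm⟩

theorem map_mk (f : Z →ₗ[R] Z') (n : ℕ) (z : Z) : map y f (mk y n z) = mk y n (f z) := by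
  simp [map, mk]

theorem map_exact {f : Z →ₗ[R] Z'} {g : Z' →ₗ[R] Z''} (h : Function.Exact f g)
    (hg : Function.Surjective g) : Function.Exact (map y f) (map y g) := by
  intro w
  obtain ⟨n, z, rfl⟩ := exists_mk_eq y w
  constructor
  · intro hz
    obtain ⟨k, z', hk⟩ := exists_pow_smul_eq_of_mk_eq_zero y ((map_mk y g n z).symm.trans hz)
    obtain ⟨z', rfl⟩ := hg z'
    obtain ⟨a, ha⟩ := (h (y ^ k • z - y ^ (n + k) • z')).1 (by simp [hk])
    refine ⟨mk y (n + k) a, ?_⟩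
    rw [map_mk, ha, map_sub, mk_add_pow_smul, map_smul, pow_smul_mk, sub_zero]
  · rintro ⟨w, hw⟩
    obtain ⟨m, a, rfl⟩ := exists_mk_eq y w
    rw [← hw, map_mk, map_mk, h.apply_apply_eq_zero, _root_.map_zero]

end AwayQuot

end Fractions

/-! ### Limit closures of the powers of a list of elements -/

section List

variable {R : Type u} [CommRing R]

/-- The ideal generated by the `n`-th powers of the members of `l`. -/
def powIdeal (l : List R) (n : ℕ) : Ideal R := Ideal.span ((fun y => y ^ n) '' {y | y ∈ l})

theorem pow_mem_powIdeal {l : List R} {y : R} (hy : y ∈ l) (n : ℕ) : y ^ n ∈ powIdeal l n :=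
  Ideal.subset_span ⟨y, hy, rfl⟩

theorem powIdeal_nil (n : ℕ) : powIdeal ([] : List R) n = ⊥ := by simp [powIdeal]

theorem powIdeal_cons (y : R) (l : List R) (n : ℕ) :
    powIdeal (y :: l) n = Ideal.span {y ^ n} ⊔ powIdeal l n := by
  have hset : {z | z ∈ y :: l} = {y} ∪ {z | z ∈ l} := by ext; simp
  rw [powIdeal, powIdeal, hset, Set.image_union, Set.image_singleton, Ideal.span_union]

theorem powIdeal_one_le_iff {l : List R} {I : Ideal R} :
    powIdeal l 1 ≤ I ↔ ∀ y ∈ l, y ∈ I := by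
  simp [powIdeal, Ideal.span_le, Set.subset_def]

theorem prod_mul_mem_powIdeal (l : List R) (n : ℕ) {r : R} (hr : r ∈ powIdeal l n) :
    l.prod * r ∈ powIdeal l (n + 1) := by
  suffices powIdeal l n ≤ Submodule.comap (LinearMap.lsmul R R l.prod) (powIdeal l (n + 1)) from
    this hr
  refine Ideal.span_le.2 ?_
  rintro _ ⟨y, hy, rfl⟩
  obtain ⟨c, hc⟩ := List.dvd_prod hy
  change l.prod * y ^ n ∈ powIdeal l (n + 1)
  rw [hc, show y * c * y ^ n = c * y ^ (n + 1) by ring]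
  exact Ideal.mul_mem_left _ _ (pow_mem_powIdeal hy _)

variable {M : Type v} [AddCommGroup M] [Module R M] {M' : Type w} [AddCommGroup M'] [Module R M']

theorem mem_powIdeal_cons_smul_top {y : R} {l : List R} {n : ℕ} {u : M} :
    u ∈ powIdeal (y :: l) n • (⊤ : Submodule R M) ↔
      ∃ a, ∃ b ∈ powIdeal l n • (⊤ : Submodule R M), y ^ n • a + b = u := by
  rw [powIdeal_cons, Submodule.sup_smul, Submodule.mem_sup, Submodule.ideal_span_singleton_smul]
  simp only [Submodule.mem_smul_pointwise_iff_exists, Submodule.mem_top, true_and,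
    exists_exists_eq_and]

theorem prod_pow_smul_mem (l : List R) (n k : ℕ) {u : M}
    (hu : u ∈ powIdeal l n • (⊤ : Submodule R M)) :
    l.prod ^ k • u ∈ powIdeal l (n + k) • (⊤ : Submodule R M) := by
  induction k with
  | zero => simpa using hu
  | succ k ih =>
    rw [pow_succ', mul_smul]
    refine Submodule.smul_induction_on ih (fun r hr m _ => ?_) fun a b ha hb => ?_
    · rw [smul_smul]
      exact Submodule.smul_mem_smul (prod_mul_mem_powIdeal l _ hr) trivial
    · rw [smul_add]
      exact add_mem ha hb

theorem prod_pow_smul_mem_of_le {l : List R} {n k k' : ℕ} {u : M}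
    (h : l.prod ^ k • u ∈ powIdeal l (n + k) • (⊤ : Submodule R M)) (hk : k ≤ k') :
    l.prod ^ k' • u ∈ powIdeal l (n + k') • (⊤ : Submodule R M) := by
  obtain ⟨j, rfl⟩ := Nat.exists_eq_add_of_le' hk
  rw [pow_add, mul_smul, show n + (j + k) = n + k + j by ring]
  exact prod_pow_smul_mem l _ _ h

variable (M) in
/-- The limit closure in `M` of the sequence of `n`-th powers of the members of `l`. -/
def limitClosurePow (l : List R) (n : ℕ) : Submodule R M where
  carrier := {u | ∃ k, l.prod ^ k • u ∈ powIdeal l (n + k) • (⊤ : Submodule R M)}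
  zero_mem' := ⟨0, by simp⟩
  add_mem' := by
    rintro a b ⟨k, ha⟩ ⟨j, hb⟩
    refine ⟨max k j, ?_⟩
    rw [smul_add]
    exact add_mem (prod_pow_smul_mem_of_le ha (le_max_left _ _))
      (prod_pow_smul_mem_of_le hb (le_max_right _ _))
  smul_mem' := by
    rintro r a ⟨k, ha⟩
    exact ⟨k, by rw [smul_comm]; exact Submodule.smul_mem _ r ha⟩

theorem map_mem_limitClosurePow {l : List R} {n : ℕ} {u : M} (h : u ∈ limitClosurePow M l n)
    (f : M →ₗ[R] M') : f u ∈ limitClosurePow M' l n := by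
  obtain ⟨k, hk⟩ := h
  refine ⟨k, ?_⟩
  rw [← map_smul]
  exact Submodule.smul_top_le_comap_smul_top _ f hk

end List

/-! ### Top local cohomology -/

section TopCohomology

variable {R : Type u} [CommRing R] {M M' M'' : Type u} [AddCommGroup M] [Module R M]
  [AddCommGroup M'] [Module R M'] [AddCommGroup M''] [Module R M'']

variable (M) in
/-- The top local cohomology `H^r_{(x₁, …, x_r)}(M)`, obtained by applying the cokernels of the
localization maps at `x_r, …, x₁` successively. -/
noncomputable def TopCohomology : List R → ModuleCat.{u} R
  | [] => ModuleCat.of R M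
  | y :: l => ModuleCat.of R (AwayQuot y (TopCohomology l))

namespace TopCohomology

/-- The class of `u / (x₁ ⋯ x_r) ^ n` in the top local cohomology. -/
noncomputable def mk : (l : List R) → (n : ℕ) → M →ₗ[R] TopCohomology M l
  | [], _ => LinearMap.id
  | y :: l, n => AwayQuot.mk y n ∘ₗ mk l n

/-- The map on top local cohomology induced by a linear map. -/
noncomputable def map (f : M →ₗ[R] M') : (l : List R) → TopCohomology M l →ₗ[R] TopCohomology M' l
  | [] => f
  | y :: l => AwayQuot.map y (map f l)

theorem prod_pow_smul_mk_add (l : List R) (n k : ℕ) (u : M) :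
    l.prod ^ k • mk l (n + k) u = mk l n u := by
  induction l with
  | nil => simp [mk]
  | cons y l ih =>
    change (y * l.prod) ^ k • AwayQuot.mk y (n + k) (mk l (n + k) u) = AwayQuot.mk y n (mk l n u)
    rw [mul_pow, mul_smul, ← map_smul (AwayQuot.mk y (n + k)), ih, AwayQuot.pow_smul_mk_add]

theorem mk_add_prod_pow_smul (l : List R) (n k : ℕ) (u : M) :
    mk l (n + k) (l.prod ^ k • u) = mk l n u := by
  rw [map_smul, prod_pow_smul_mk_add]

theorem exists_mk_eq (l : List R) (w : TopCohomology M l) : ∃ n u, mk l n u = w := by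
  induction l with
  | nil => exact ⟨0, w, rfl⟩
  | cons y l ih =>
    obtain ⟨n, z, rfl⟩ := AwayQuot.exists_mk_eq y (w : AwayQuot y (TopCohomology M l))
    obtain ⟨m, u, rfl⟩ := ih z
    refine ⟨n + m, y ^ m • l.prod ^ n • u, ?_⟩
    change AwayQuot.mk y (n + m) (mk l (n + m) _) = _
    rw [map_smul, AwayQuot.mk_add_pow_smul, add_comm n m, mk_add_prod_pow_smul]

theorem map_mk (f : M →ₗ[R] M') (l : List R) (n : ℕ) (u : M) :
    map f l (mk l n u) = mk l n (f u) := by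
  induction l with
  | nil => rfl
  | cons y l ih =>
    change AwayQuot.map y (map f l) (AwayQuot.mk y n (mk l n u)) = AwayQuot.mk y n (mk l n (f u))
    rw [AwayQuot.map_mk, ih]

theorem map_smul_id (r : R) (l : List R) :
    map (r • LinearMap.id : M →ₗ[R] M) l = r • LinearMap.id := by
  ext w
  obtain ⟨n, u, rfl⟩ := exists_mk_eq l w
  simp [map_mk]

theorem map_surjective {f : M →ₗ[R] M'} (hf : Function.Surjective f) (l : List R) :
    Function.Surjective (map f l) := by
  intro w
  obtain ⟨n, u, rfl⟩ := exists_mk_eq l w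
  obtain ⟨u, rfl⟩ := hf u
  exact ⟨mk l n u, map_mk f l n u⟩

theorem map_exact {f : M →ₗ[R] M'} {g : M' →ₗ[R] M''} (h : Function.Exact f g)
    (hg : Function.Surjective g) (l : List R) : Function.Exact (map f l) (map g l) := by
  induction l with
  | nil => exact h
  | cons y l ih => exact AwayQuot.map_exact y ih (map_surjective hg l)

theorem subsingleton_of_surjective {f : M →ₗ[R] M'} (hf : Function.Surjective f) (l : List R)
    [Subsingleton (TopCohomology M l)] : Subsingleton (TopCohomology M' l) :=
  (map_surjective hf l).subsingleton

theorem subsingleton_of_exact {f : M →ₗ[R] M'} {g : M' →ₗ[R] M''} (h : Function.Exact f g)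
    (hg : Function.Surjective g) (l : List R) [Subsingleton (TopCohomology M l)]
    [Subsingleton (TopCohomology M'' l)] : Subsingleton (TopCohomology M' l) := by
  refine subsingleton_of_forall_eq 0 fun w => ?_
  obtain ⟨v, rfl⟩ := (map_exact h hg l w).1 (Subsingleton.elim _ _)
  rw [Subsingleton.elim v 0, map_zero]

theorem isArtinian_of_exact {f : M →ₗ[R] M'} {g : M' →ₗ[R] M''} (h : Function.Exact f g)
    (hg : Function.Surjective g) (l : List R) [IsArtinian R (TopCohomology M l)]
    [IsArtinian R (TopCohomology M'' l)] : IsArtinian R (TopCohomology M' l) :=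
  isArtinian_of_range_eq_ker _ _ (LinearMap.exact_iff.1 (map_exact h hg l)).symm

theorem smul_eq_zero_of_forall {r : R} (h : ∀ u : M, r • u = 0) (l : List R)
    (w : TopCohomology M l) : r • w = 0 := by
  obtain ⟨n, u, rfl⟩ := exists_mk_eq l w
  rw [← map_smul, h, map_zero]

theorem subsingleton_of_subsingleton [Subsingleton M] (l : List R) :
    Subsingleton (TopCohomology M l) := by
  refine subsingleton_of_forall_eq 0 fun w => ?_
  obtain ⟨n, u, rfl⟩ := exists_mk_eq l w
  rw [Subsingleton.elim u 0, map_zero]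

theorem subsingleton_of_isUnit_of_mem {l : List R} {y : R} (hy : y ∈ l) (hu : IsUnit y) :
    Subsingleton (TopCohomology M l) := by
  induction l with
  | nil => simp at hy
  | cons z l ih =>
    rcases List.mem_cons.1 hy with rfl | hy
    · exact AwayQuot.subsingleton_of_isUnit y hu
    · have := ih hy
      exact AwayQuot.subsingleton_of_forall_smul_eq_zero z fun _ => Subsingleton.elim _ _

theorem subsingleton_cons_of_forall_smul_eq_zero {y : R} (h : ∀ u : M, y • u = 0) (l : List R) :
    Subsingleton (TopCohomology M (y :: l)) :=
  AwayQuot.subsingleton_of_forall_smul_eq_zero y (smul_eq_zero_of_forall h l)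

theorem exists_pow_smul_eq_zero (y : R) (l : List R) (w : TopCohomology M (y :: l)) :
    ∃ n, y ^ n • w = 0 :=
  AwayQuot.exists_pow_smul_eq_zero y (w : AwayQuot y (TopCohomology M l))

theorem mem_limitClosurePow_of_mk_eq_zero {l : List R} {n : ℕ} {u : M} (h : mk l n u = 0) :
    u ∈ limitClosurePow M l n := by
  induction l generalizing n u with
  | nil => exact ⟨0, by simp [show u = 0 from h]⟩
  | cons y l ih =>
    obtain ⟨k, z, hk⟩ := AwayQuot.exists_pow_smul_eq_of_mk_eq_zero y
      (show AwayQuot.mk y n (mk l n u) = 0 from h)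
    obtain ⟨m, v, rfl⟩ := exists_mk_eq l z
    have hdiff : mk l (n + k + m) (y ^ k • l.prod ^ (k + m) • u
        - y ^ (n + k) • l.prod ^ (n + k) • v) = 0 := by
      have hu := mk_add_prod_pow_smul l n (k + m) u
      have hv := mk_add_prod_pow_smul l m (n + k) v
      rw [← add_assoc] at hu
      rw [add_comm] at hv
      rw [map_sub, map_smul, map_smul _ (y ^ (n + k)), hu, hv, hk, sub_self]
    obtain ⟨j, hj⟩ := ih hdiff
    refine ⟨k + m + j, mem_powIdeal_cons_smul_top.2 ⟨l.prod ^ (n + k + j) • v,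
      y ^ (m + j) • l.prod ^ j • (y ^ k • l.prod ^ (k + m) • u
        - y ^ (n + k) • l.prod ^ (n + k) • v), Submodule.smul_mem _ _ ?_, ?_⟩⟩
    · convert hj using 3
      ring
    · rw [List.prod_cons]
      module

theorem exact_smul_id_mkQ (y : R) :
    Function.Exact (y • LinearMap.id : M →ₗ[R] M) (Submodule.mkQ _ : M →ₗ[R] QuotSMulTop y M) :=
  fun u => by
    rw [Submodule.mkQ_apply, Submodule.Quotient.mk_eq_zero, Submodule.mem_smul_pointwise_iff_exists]
    simp

/-- `H^{r-1}` of `M / y M` maps onto the `y`-torsion of `H^r` of `M`; this is the end of the long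
exact sequence of `M --y--> M → M / y M → 0`. -/
theorem exists_torsionBy_le_range (y : R) (l : List R) :
    ∃ θ : TopCohomology (QuotSMulTop y M) l →ₗ[R] TopCohomology M (y :: l),
      Submodule.torsionBy R (TopCohomology M (y :: l)) y ≤ LinearMap.range θ := by
  set π : M →ₗ[R] QuotSMulTop y M := Submodule.mkQ _
  have hπ : Function.Surjective π := Submodule.mkQ_surjective _
  have hex : Function.Exact (y • LinearMap.id : M →ₗ[R] M) π := exact_smul_id_mkQ y
  set δ : TopCohomology M l →ₗ[R] AwayQuot y (TopCohomology M l) := AwayQuot.mk y 1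
  have hker : LinearMap.ker (map π l) ≤ LinearMap.ker δ := by
    intro w hw
    obtain ⟨w, rfl⟩ := (map_exact hex hπ l w).1 hw
    rw [map_smul_id, LinearMap.mem_ker, LinearMap.smul_apply, LinearMap.id_apply, map_smul]
    simpa using AwayQuot.pow_smul_mk y 1 w
  refine ⟨Submodule.liftQ _ δ hker ∘ₗ
    ((map π l).quotKerEquivOfSurjective (map_surjective hπ l)).symm.toLinearMap, fun w hw => ?_⟩
  obtain ⟨z, hz⟩ := AwayQuot.exists_mk_one_eq_of_smul_eq_zero y
    (w := (w : AwayQuot y (TopCohomology M l))) hw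
  refine ⟨map π l z, ?_⟩
  rw [LinearMap.comp_apply, LinearEquiv.coe_coe, LinearMap.quotKerEquivOfSurjective_symm_apply]
  exact hz

end TopCohomology

end TopCohomology

/-! ### Melkersson's criterion -/

section Melkersson

theorem exists_forall_ge_eq_of_antitone {α : Type*} [PartialOrder α] [WellFoundedLT α]
    {D : ℕ → ℕ → α} (hfst : ∀ n, Antitone fun j => D j n) (hsnd : ∀ j, Antitone (D j)) :
    ∃ i, ∀ j, ∀ n ≥ i, D j n = D j i := by
  have hrow (j) : ∃ i, ∀ n ≥ i, D j n = D j i := by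
    obtain ⟨_, ⟨i, rfl⟩, hi⟩ := wellFounded_lt.has_min (Set.range (D j)) (Set.range_nonempty _)
    exact ⟨i, fun n hn => (hsnd j hn).eq_of_not_lt (hi _ ⟨n, rfl⟩)⟩
  choose i hi using hrow
  obtain ⟨_, ⟨⟨j₀, n₀⟩, rfl⟩, hmin⟩ := wellFounded_lt.has_min
    (Set.range fun a : ℕ × ℕ => D a.1 a.2) (Set.range_nonempty _)
  have hlarge (j) (hj : j₀ ≤ j) (n) (hn : n₀ ≤ n) : D j n = D j₀ n₀ :=
    ((hfst n hj).trans (hsnd j₀ hn)).eq_of_not_lt (hmin _ ⟨(j, n), rfl⟩)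
  refine ⟨n₀ + (Finset.range j₀).sup i, fun j n hn => ?_⟩
  rcases lt_or_ge j j₀ with hj | hj
  · have hij : i j ≤ n₀ + (Finset.range j₀).sup i :=
      (Finset.le_sup (Finset.mem_range.2 hj)).trans (Nat.le_add_left _ _)
    rw [hi j n (hij.trans hn), hi j _ hij]
  · rw [hlarge j hj n ((Nat.le_add_right _ _).trans hn), hlarge j hj _ (Nat.le_add_right _ _)]

variable {R : Type u} [CommRing R] {V : Type v} [AddCommGroup V] [Module R V]

/-- The submodule `y ^ j U ∩ (0 :_V y)` of the `y`-torsion of `V`. -/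
def torsionOfPowSMul (y : R) (j : ℕ) (U : Submodule R V) :
    Submodule R (Submodule.torsionBy R V y) :=
  (U.map (LinearMap.lsmul R V (y ^ j))).comap (Submodule.subtype _)

theorem mem_torsionOfPowSMul {y : R} {j : ℕ} {U : Submodule R V}
    {s : Submodule.torsionBy R V y} :
    s ∈ torsionOfPowSMul y j U ↔ ∃ u ∈ U, y ^ j • u = (s : V) := by
  simp [torsionOfPowSMul]

theorem torsionOfPowSMul_antitone (y : R) (U : Submodule R V) :
    Antitone fun j => torsionOfPowSMul y j U := by
  intro j j' hj s hs
  obtain ⟨u, hu, hs⟩ := mem_torsionOfPowSMul.1 hs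
  obtain ⟨k, rfl⟩ := Nat.exists_eq_add_of_le hj
  exact mem_torsionOfPowSMul.2 ⟨y ^ k • u, U.smul_mem _ hu, by rw [smul_smul, ← pow_add, hs]⟩

theorem torsionOfPowSMul_mono (y : R) (j : ℕ) :
    Monotone (torsionOfPowSMul y j : Submodule R V → _) := fun _ _ h =>
  Submodule.comap_mono (Submodule.map_mono h)

theorem le_of_torsionOfPowSMul_le {y : R} (htor : ∀ v : V, ∃ n, y ^ n • v = 0)
    {U U' : Submodule R V} (hU : U' ≤ U)
    (h : ∀ j, torsionOfPowSMul y j U ≤ torsionOfPowSMul y j U') : U ≤ U' := by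
  intro v hv
  obtain ⟨n, hn⟩ := htor v
  induction n generalizing v with
  | zero => simp_all
  | succ n ih =>
    have htors : y ^ n • v ∈ Submodule.torsionBy R V y := by
      rw [Submodule.mem_torsionBy_iff, smul_smul, ← pow_succ', hn]
    obtain ⟨v', hv', hvv'⟩ := mem_torsionOfPowSMul.1
      (h n (mem_torsionOfPowSMul.2 ⟨v, hv, rfl⟩ : ⟨_, htors⟩ ∈ _))
    have hsub := ih (sub_mem hv (hU hv')) (by rw [smul_sub, hvv', sub_self])
    simpa using add_mem hsub hv'

theorem isArtinian_of_isArtinian_torsionBy {y : R} (htor : ∀ v : V, ∃ n, y ^ n • v = 0)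
    [IsArtinian R (Submodule.torsionBy R V y)] : IsArtinian R V := by
  refine monotone_stabilizes_iff_artinian.1 fun U => ?_
  obtain ⟨i, hi⟩ := exists_forall_ge_eq_of_antitone
    (D := fun j n => torsionOfPowSMul y j (OrderDual.ofDual (U n)))
    (fun n => torsionOfPowSMul_antitone y _)
    (fun j _ _ h => torsionOfPowSMul_mono y j (U.monotone h))
  refine ⟨i, fun n hn => le_antisymm (U.monotone hn) ?_⟩
  exact le_of_torsionOfPowSMul_le htor (U.monotone hn) fun j => (hi j n hn).ge

end Melkersson

/-! ### Vanishing and Artinianness of top local cohomology -/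

section TopCohomologyDimension

variable {R : Type u} [CommRing R] {M : Type u} [AddCommGroup M] [Module R M]

theorem smul_quotient_eq_zero {I : Ideal R} {r : R} (hr : r ∈ I) (u : R ⧸ I) : r • u = 0 := by
  rw [Algebra.smul_def, Ideal.Quotient.algebraMap_eq, Ideal.Quotient.eq_zero_iff_mem.2 hr, zero_mul]

theorem isSMulRegular_quotient {p : Ideal R} [p.IsPrime] {r : R} (hr : r ∉ p) :
    IsSMulRegular (R ⧸ p) r := fun a b hab =>
  mul_left_cancel₀ (mt Ideal.Quotient.eq_zero_iff_mem.1 hr) <| by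
    simpa only [Algebra.smul_def, Ideal.Quotient.algebraMap_eq] using hab

theorem smul_eq_zero_or_isSMulRegular {p : Ideal R} [p.IsPrime] (e : M ≃ₗ[R] R ⧸ p) (y : R) :
    (∀ u : M, y • u = 0) ∨ IsSMulRegular M y := by
  rw [e.isSMulRegular_congr]
  by_cases hy : y ∈ p
  · exact Or.inl fun u => e.injective (by rw [map_smul, map_zero, smul_quotient_eq_zero hy])
  · exact Or.inr (isSMulRegular_quotient hy)

theorem isMaximal_of_ringKrullDim_quotient_le_zero {p : Ideal R} [p.IsPrime]
    (h : ringKrullDim (R ⧸ p) ≤ 0) : p.IsMaximal := by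
  have : Ring.KrullDimLE 0 (R ⧸ p) := Ring.krullDimLE_iff.2 (by exact_mod_cast h)
  rw [← Ideal.bot_quotient_isMaximal_iff]
  infer_instance

namespace TopCohomology

theorem subsingleton_cons_of_subsingleton_quotSMulTop {y : R} {l : List R}
    [Subsingleton (TopCohomology (QuotSMulTop y M) l)] :
    Subsingleton (TopCohomology M (y :: l)) := by
  obtain ⟨θ, hθ⟩ := exists_torsionBy_le_range (M := M) y l
  have hreg (w : TopCohomology M (y :: l)) (hw : y • w = 0) : w = 0 := by
    obtain ⟨v, rfl⟩ := hθ hw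
    rw [Subsingleton.elim v 0, map_zero]
  refine subsingleton_of_forall_eq 0 fun w => ?_
  obtain ⟨n, hn⟩ := exists_pow_smul_eq_zero y l w
  induction n with
  | zero => simpa using hn
  | succ n ih => exact ih (hreg _ (by rwa [pow_succ', mul_smul] at hn))

theorem isArtinian_cons_of_isArtinian_quotSMulTop {y : R} {l : List R}
    [IsArtinian R (TopCohomology (QuotSMulTop y M) l)] :
    IsArtinian R (TopCohomology M (y :: l)) := by
  obtain ⟨θ, hθ⟩ := exists_torsionBy_le_range (M := M) y l
  have : IsArtinian R (LinearMap.range θ) :=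
    isArtinian_of_surjective _ θ.rangeRestrict θ.surjective_rangeRestrict
  have : IsArtinian R (Submodule.torsionBy R (TopCohomology M (y :: l)) y) := isArtinian_of_le hθ
  exact isArtinian_of_isArtinian_torsionBy (exists_pow_smul_eq_zero y l)

variable [IsNoetherianRing R] [Module.Finite R M]

theorem subsingleton_of_supportDim_lt {l : List R} (h : Module.supportDim R M < l.length) :
    Subsingleton (TopCohomology M l) := by
  induction l generalizing M with
  | nil =>
    have : Subsingleton M := by
      rw [← Module.support_eq_empty_iff (R := R), Set.eq_empty_iff_forall_notMem]
      intro p hp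
      have : Nonempty (Module.support R M) := ⟨⟨p, hp⟩⟩
      exact h.not_ge Order.krullDim_nonneg
    exact subsingleton_of_subsingleton _
  | cons y l ih =>
    refine IsNoetherianRing.induction_on_isQuotientEquivQuotientPrime R ‹_›
      (motive := fun N _ _ _ => Module.supportDim R N < (y :: l).length →
        Subsingleton (TopCohomology N (y :: l)))
      (fun N _ _ _ _ _ => subsingleton_of_subsingleton _) (fun N _ _ _ p e hN => ?_)
      (fun N₁ _ _ _ N₂ _ _ _ N₃ _ _ _ f g hf hg hfg h₁ h₃ h₂ => ?_) h
    · rcases smul_eq_zero_or_isSMulRegular e y with hy | hy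
      · exact subsingleton_cons_of_forall_smul_eq_zero hy l
      · have hdim := Module.supportDim_quotSMulTop_succ_le_of_notMem_minimalPrimes
          fun _ => hy.notMem_of_mem_minimalPrimes
        have := ih (M := QuotSMulTop y N) <| lt_of_add_lt_add_right <| hdim.trans_lt <| by
          simpa using hN
        exact subsingleton_cons_of_subsingleton_quotSMulTop
    · have := h₁ ((Module.supportDim_le_of_injective f hf).trans_lt h₂)
      have := h₃ ((Module.supportDim_le_of_surjective g hg).trans_lt h₂)
      exact subsingleton_of_exact hfg hg _

theorem isArtinian_of_supportDim_le {l : List R} (h : Module.supportDim R M ≤ l.length) :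
    IsArtinian R (TopCohomology M l) := by
  induction l generalizing M with
  | nil =>
    refine IsNoetherianRing.induction_on_isQuotientEquivQuotientPrime R ‹_›
      (motive := fun N _ _ _ => Module.supportDim R N ≤ 0 → IsArtinian R N)
      (fun N _ _ _ _ _ => inferInstance) (fun N _ _ _ p e hN => ?_)
      (fun N₁ _ _ _ N₂ _ _ _ N₃ _ _ _ f g hf hg hfg h₁ h₃ h₂ => ?_) h
    · rw [Module.supportDim_eq_of_equiv e, Module.supportDim_quotient_eq_ringKrullDim] at hN
      have : IsSimpleModule R (R ⧸ p.asIdeal) := isSimpleModule_iff_isCoatom.2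
        (isMaximal_of_ringKrullDim_quotient_le_zero hN).out
      exact isArtinian_of_linearEquiv e.symm
    · have := h₁ ((Module.supportDim_le_of_injective f hf).trans h₂)
      have := h₃ ((Module.supportDim_le_of_surjective g hg).trans h₂)
      exact isArtinian_of_range_eq_ker f g (LinearMap.exact_iff.1 hfg).symm
  | cons y l ih =>
    refine IsNoetherianRing.induction_on_isQuotientEquivQuotientPrime R ‹_›
      (motive := fun N _ _ _ => Module.supportDim R N ≤ (y :: l).length →
        IsArtinian R (TopCohomology N (y :: l)))
      (fun N _ _ _ _ _ => have := subsingleton_of_subsingleton (M := N) (y :: l); inferInstance)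
      (fun N _ _ _ p e hN => ?_)
      (fun N₁ _ _ _ N₂ _ _ _ N₃ _ _ _ f g hf hg hfg h₁ h₃ h₂ => ?_) h
    · rcases smul_eq_zero_or_isSMulRegular e y with hy | hy
      · have := subsingleton_cons_of_forall_smul_eq_zero hy l
        infer_instance
      · have hdim := Module.supportDim_quotSMulTop_succ_le_of_notMem_minimalPrimes
          fun _ => hy.notMem_of_mem_minimalPrimes
        have := ih (M := QuotSMulTop y N) <| ENat.WithBot.add_le_add_one_right_iff.1 <|
          hdim.trans <| by simpa using hN
        exact isArtinian_cons_of_isArtinian_quotSMulTop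
    · have := h₁ ((Module.supportDim_le_of_injective f hf).trans h₂)
      have := h₃ ((Module.supportDim_le_of_surjective g hg).trans h₂)
      exact isArtinian_of_exact hfg hg _

end TopCohomology

end TopCohomologyDimension

/-! ### Injective hulls -/

section InjectiveHull

variable {R : Type u} [CommRing R] {Q : Type v} [AddCommGroup Q] [Module R Q]

/-- `B` is an essential extension of `A` inside an ambient module: a nonzero submodule of `B`
meets `A`. -/
def IsEssentialExtension (A B : Submodule R Q) : Prop :=
  A ≤ B ∧ ∀ U ≤ B, Disjoint U A → U = ⊥

theorem IsEssentialExtension.trans {A B C : Submodule R Q} (h : IsEssentialExtension A B)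
    (h' : IsEssentialExtension B C) : IsEssentialExtension A C := by
  refine ⟨h.1.trans h'.1, fun U hU hUA => h'.2 U hU ?_⟩
  exact disjoint_iff.2 (h.2 _ inf_le_right (hUA.mono_left inf_le_left))

theorem exists_maximal_isEssentialExtension (A : Submodule R Q) :
    ∃ E, Maximal (IsEssentialExtension A) E := by
  obtain ⟨E, -, hE⟩ := zorn_le_nonempty₀ {E | IsEssentialExtension A E}
    (fun c hc hchain C hC => by
      refine ⟨sSup c, ⟨(hc hC).1.trans (le_sSup hC), fun U hU hUA => ?_⟩, fun _ => le_sSup⟩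
      rw [← inf_eq_left.2 hU, hchain.directedOn.inf_sSup_eq]
      exact iSup₂_eq_bot.2 fun B hB => (hc hB).2 _ inf_le_right (hUA.mono_left inf_le_left))
    A ⟨le_rfl, fun _ hU hUA => hUA.eq_bot_of_le hU⟩
  exact ⟨E, hE⟩

theorem exists_maximal_disjoint (A : Submodule R Q) : ∃ C, Maximal (Disjoint A) C := by
  obtain ⟨C, -, hC⟩ := zorn_le_nonempty₀ {C | Disjoint A C}
    (fun c hc hchain _ _ => ⟨sSup c, hchain.directedOn.disjoint_sSup_right.2 hc, fun _ => le_sSup⟩)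
    ⊥ disjoint_bot_right
  exact ⟨C, hC⟩

theorem injective_of_retraction {E : Type v} [AddCommGroup E] [Module R E] [Module.Injective R Q]
    (i : E →ₗ[R] Q) (ρ : Q →ₗ[R] E) (h : ∀ x, ρ (i x) = x) : Module.Injective R E where
  out X Y _ _ _ _ f hf g := by
    obtain ⟨g', hg'⟩ := Module.Injective.out f hf (i ∘ₗ g)
    exact ⟨ρ ∘ₗ g', fun x => by rw [LinearMap.comp_apply, hg', LinearMap.comp_apply, h]⟩

theorem exists_extension_of_ker_le {X Y : Type v} [AddCommGroup X] [AddCommGroup Y] [Module R X]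
    [Module R Y] [Module.Injective R Q] (f : X →ₗ[R] Y) (g : X →ₗ[R] Q)
    (h : LinearMap.ker f ≤ LinearMap.ker g) : ∃ g' : Y →ₗ[R] Q, ∀ x, g' (f x) = g x := by
  obtain ⟨g', hg'⟩ := Module.Injective.out (Submodule.liftQ _ f le_rfl)
    (LinearMap.ker_eq_bot.1 (Submodule.ker_liftQ_eq_bot _ _ _ le_rfl)) (Submodule.liftQ _ g h)
  exact ⟨g', fun x => by simpa using hg' (Submodule.Quotient.mk x)⟩

theorem injective_of_maximal_isEssentialExtension [Module.Injective R Q] {A E : Submodule R Q}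
    (hE : Maximal (IsEssentialExtension A) E) : Module.Injective R E := by
  obtain ⟨C, hEC, hC⟩ := exists_maximal_disjoint E
  obtain ⟨g, hg⟩ := exists_extension_of_ker_le (C.mkQ ∘ₗ E.subtype) E.subtype fun x hx => by
    have hxC : (x : Q) ∈ C := by simpa using hx
    simpa using Submodule.disjoint_def.1 hEC x x.2 hxC
  replace hg (x : Q) (hx : x ∈ E) : g (C.mkQ x) = x := hg ⟨x, hx⟩
  -- the range of `g` is an essential extension of `E`, so the maximality of `E` applies
  have hess : IsEssentialExtension E (LinearMap.range g) := by
    refine ⟨fun x hx => ⟨_, hg x hx⟩, fun U hU hUE => ?_⟩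
    have hdisj : Disjoint E (U.comap (g ∘ₗ C.mkQ)) := by
      refine Submodule.disjoint_def.2 fun x hx hxU => Submodule.disjoint_def.1 hUE x ?_ hx
      simpa only [Submodule.mem_comap, LinearMap.comp_apply, hg x hx] using hxU
    have hCle : C ≤ U.comap (g ∘ₗ C.mkQ) := fun x hx => by
      simp [(Submodule.Quotient.mk_eq_zero C).2 hx]
    refine (Submodule.eq_bot_iff U).2 fun z hz => ?_
    obtain ⟨q, rfl⟩ := hU hz
    obtain ⟨x, rfl⟩ := C.mkQ_surjective q
    have hxC : x ∈ C := hC hdisj hCle hz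
    rw [Submodule.mkQ_apply, (Submodule.Quotient.mk_eq_zero C).2 hxC, map_zero]
  have hrange : LinearMap.range g ≤ E := hE.2 (hE.1.trans hess) hess.1
  exact injective_of_retraction E.subtype
    ((g ∘ₗ C.mkQ).codRestrict E fun x => hrange ⟨_, rfl⟩) fun x => Subtype.ext (hg x x.2)

end InjectiveHull

/-! ### Matlis duality -/

section Matlis

variable {R : Type u} [CommRing R]

theorem exists_injective_embedding (K : Type u) [AddCommGroup K] [Module R K] :
    ∃ (Q : Type u) (_ : AddCommGroup Q) (_ : Module R Q) (i : K →ₗ[R] Q),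
      Module.Injective R Q ∧ Function.Injective i := by
  let Q : ModuleCat.{u} R := CategoryTheory.Injective.under (ModuleCat.of R K)
  have : CategoryTheory.Injective (ModuleCat.of R Q) :=
    inferInstanceAs (CategoryTheory.Injective (CategoryTheory.Injective.under (ModuleCat.of R K)))
  exact ⟨Q, inferInstance, inferInstance, (CategoryTheory.Injective.ι (ModuleCat.of R K)).hom,
    Module.injective_module_of_injective_object R Q,
    (ModuleCat.mono_iff_injective _).1 inferInstance⟩

variable [IsLocalRing R] {E : Type u} [AddCommGroup E] [Module R E]

variable (R) in
/-- `E` is an injective hull of the residue field of `R`, the residue field being embedded as the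
line `R e`. -/
structure IsResidueFieldHull (e : E) : Prop where
  injective : Module.Injective R E
  ne_zero : e ≠ 0
  smul_eq_zero : ∀ r ∈ maximalIdeal R, r • e = 0
  exists_smul_eq : ∀ v : E, v ≠ 0 → ∃ r : R, r • v = e

variable (R) in
theorem exists_isResidueFieldHull : ∃ (E : Type u) (_ : AddCommGroup E) (_ : Module R E) (e : E),
    IsResidueFieldHull R e := by
  obtain ⟨Q, _, _, i, hQ, hi⟩ := exists_injective_embedding (R := R) (R ⧸ maximalIdeal R)
  have hsmul (r : R) (a : R ⧸ maximalIdeal R) : r • a = Ideal.Quotient.mk _ r * a :=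
    Algebra.smul_def r a
  obtain ⟨E, hE⟩ := exists_maximal_isEssentialExtension (LinearMap.range i)
  refine ⟨E, inferInstance, inferInstance, ⟨i 1, hE.1.1 ⟨1, rfl⟩⟩,
    injective_of_maximal_isEssentialExtension hE, fun h => ?_, fun r hr => Subtype.ext ?_,
    fun v hv => ?_⟩
  · exact one_ne_zero (hi ((congrArg Subtype.val h).trans (map_zero i).symm))
  · change r • i 1 = 0
    rw [← map_smul, hsmul, Ideal.Quotient.eq_zero_iff_mem.2 hr, zero_mul, map_zero]
  · have hnot : ¬ Disjoint (Submodule.span R {(v : Q)}) (LinearMap.range i) := fun h =>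
      hv (Subtype.ext (Submodule.span_singleton_eq_bot.1
        (hE.1.2 _ ((Submodule.span_singleton_le_iff_mem _ _).2 v.2) h)))
    simp only [Submodule.disjoint_def, not_forall] at hnot
    obtain ⟨_, hs, ⟨a, rfl⟩, ha⟩ := hnot
    obtain ⟨s, hs⟩ := Submodule.mem_span_singleton.1 hs
    obtain ⟨t, ht⟩ := Ideal.Quotient.exists_inv (I := maximalIdeal R) (a := a) fun h =>
      ha (by rw [h, map_zero])
    obtain ⟨r, rfl⟩ := Ideal.Quotient.mk_surjective t
    refine ⟨r * s, Subtype.ext ?_⟩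
    change (r * s) • (v : Q) = i 1
    rw [mul_smul, hs, ← map_smul, hsmul, mul_comm, ht]

namespace IsResidueFieldHull

variable {e : E} (he : IsResidueFieldHull R e) {V : Type u} [AddCommGroup V] [Module R V]
include he

theorem mem_span_of_smul_eq_zero {v : E} (hv : ∀ r ∈ maximalIdeal R, r • v = 0) :
    v ∈ Submodule.span R {e} := by
  by_cases hv0 : v = 0
  · exact hv0 ▸ zero_mem _
  obtain ⟨r, rfl⟩ := he.exists_smul_eq v hv0
  have hr : IsUnit r := by
    by_contra h
    exact he.ne_zero (hv r ((mem_maximalIdeal r).2 h))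
  exact Submodule.mem_span_singleton.2 ⟨↑hr.unit⁻¹, by rw [smul_smul, hr.val_inv_mul, one_smul]⟩

theorem exists_linearMap_apply_eq {v : V} (hv : v ≠ 0) : ∃ f : V →ₗ[R] E, f v = e := by
  have := he.injective
  obtain ⟨f, hf⟩ := exists_extension_of_ker_le (LinearMap.toSpanSingleton R V v)
    (LinearMap.toSpanSingleton R E e) fun r hr => he.smul_eq_zero r <| by
      refine (mem_maximalIdeal r).2 fun hu => hv ?_
      exact hu.smul_eq_zero.1 hr
  exact ⟨f, by simpa using hf 1⟩

theorem exists_pow_smul_eq_zero [IsNoetherianRing R] (v : E) :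
    ∃ n, ∀ r ∈ maximalIdeal R ^ n, r • v = 0 := by
  by_contra! h
  have hmem (n : ℕ) : ∃ r ∈ maximalIdeal R ^ n, r • v = e := by
    obtain ⟨r, hr, hrv⟩ := h n
    obtain ⟨s, hs⟩ := he.exists_smul_eq _ hrv
    exact ⟨s * r, Ideal.mul_mem_left _ s hr, by rw [mul_smul, hs]⟩
  obtain ⟨r₀, -, hr₀⟩ := hmem 0
  let e' : Submodule.span R {v} := ⟨e, Submodule.mem_span_singleton.2 ⟨r₀, hr₀⟩⟩
  have he' : e' ∈ (⨅ n : ℕ, maximalIdeal R ^ n • ⊤ : Submodule R (Submodule.span R {v})) := by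
    refine (Submodule.mem_iInf _).2 fun n => ?_
    obtain ⟨r, hr, hrv⟩ := hmem n
    have heq : e' = r • ⟨v, Submodule.mem_span_singleton_self v⟩ := Subtype.ext hrv.symm
    exact heq ▸ Submodule.smul_mem_smul hr trivial
  rw [Ideal.iInf_pow_smul_eq_bot_of_isLocalRing _ (Ideal.IsPrime.ne_top inferInstance)] at he'
  exact he.ne_zero (congrArg Subtype.val ((Submodule.mem_bot R).1 he'))

theorem exists_smul_eq_of_socle (φ : E →ₗ[R] E) :
    ∃ c : R, ∀ v, (∀ r ∈ maximalIdeal R, r • v = 0) → φ v = c • v := by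
  obtain ⟨c, hc⟩ := Submodule.mem_span_singleton.1 <| he.mem_span_of_smul_eq_zero (v := φ e)
    fun r hr => by rw [← map_smul, he.smul_eq_zero r hr, map_zero]
  refine ⟨c, fun v hv => ?_⟩
  obtain ⟨t, rfl⟩ := Submodule.mem_span_singleton.1 (he.mem_span_of_smul_eq_zero hv)
  rw [map_smul, ← hc, smul_comm]

theorem exists_smul_eq_of_mem_pow [IsNoetherianRing R] (φ : E →ₗ[R] E) (n : ℕ)
    (hφ : ∀ v, (∀ r ∈ maximalIdeal R ^ n, r • v = 0) → φ v = 0) :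
    ∃ a ∈ maximalIdeal R ^ n, ∀ v, (∀ r ∈ maximalIdeal R ^ (n + 1), r • v = 0) → φ v = a • v := by
  have := he.injective
  obtain ⟨k, s, hs⟩ := Submodule.fg_iff_exists_fin_generating_family.1
    (IsNoetherian.noetherian (maximalIdeal R ^ n))
  have hs_mem (i) : s i ∈ maximalIdeal R ^ n := hs ▸ Submodule.subset_span ⟨i, rfl⟩
  let T : Submodule R E := Submodule.torsionBySet R E ↑(maximalIdeal R ^ (n + 1))
  -- on `T` the map `φ` factors through `v ↦ (s i • v)ᵢ`, which takes values in the socle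
  obtain ⟨g, hg⟩ := exists_extension_of_ker_le
    (LinearMap.pi fun i => LinearMap.lsmul R E (s i) ∘ₗ T.subtype) (φ ∘ₗ T.subtype) fun v hv => by
      have hspan : Submodule.span R (Set.range s) ≤
          LinearMap.ker (LinearMap.toSpanSingleton R E v) := Submodule.span_le.2 <| by
        rintro _ ⟨i, rfl⟩
        exact congrFun hv i
      exact hφ _ fun r hr => hspan (hs ▸ hr)
  choose c hc using fun i => he.exists_smul_eq_of_socle (g ∘ₗ LinearMap.single R (fun _ => E) i)
  refine ⟨∑ i, c i * s i, sum_mem fun i _ => Ideal.mul_mem_left _ _ (hs_mem i), fun v hv => ?_⟩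
  have hterm (i) : g (Pi.single i (s i • v)) = (c i * s i) • v := by
    rw [mul_smul]
    refine hc i _ fun r hr => ?_
    rw [smul_smul]
    exact hv _ (pow_succ' (maximalIdeal R) n ▸ Ideal.mul_mem_mul hr (hs_mem i))
  have hgv : g (fun i => s i • v) = φ v :=
    hg ⟨v, (Submodule.mem_torsionBySet_iff _ _).2 fun r => hv r r.2⟩
  rw [← hgv, ← Finset.univ_sum_single fun i => s i • v, map_sum, Finset.sum_smul]
  exact Finset.sum_congr rfl fun i _ => hterm i

theorem exists_eq_smul_id [IsNoetherianRing R] [IsPrecomplete (maximalIdeal R) R]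
    (φ : E →ₗ[R] E) : ∃ a : R, φ = a • LinearMap.id := by
  let Agrees (n : ℕ) (a : R) : Prop :=
    ∀ v, (∀ r ∈ maximalIdeal R ^ n, r • v = 0) → φ v = a • v
  have hstep (n : ℕ) (a : R) (ha : Agrees n a) :
      ∃ b, b - a ∈ maximalIdeal R ^ n ∧ Agrees (n + 1) b := by
    obtain ⟨c, hc, hφ⟩ := he.exists_smul_eq_of_mem_pow (φ - a • LinearMap.id) n fun v hv => by
      simp [ha v hv]
    refine ⟨a + c, by simpa using hc, fun v hv => ?_⟩
    rw [add_smul, ← hφ v hv]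
    simp
  have hzero : Agrees 0 0 := fun v hv => by
    rw [show v = 0 by simpa using hv 1 (by simp), map_zero, smul_zero]
  choose! b hb_sub hb using hstep
  let seq (n : ℕ) : R := Nat.rec 0 b n
  have hseq (n : ℕ) : Agrees n (seq n) := by
    induction n with
    | zero => exact hzero
    | succ n ih => exact hb n _ ih
  have hcauchy (n k : ℕ) : seq (n + k) - seq n ∈ maximalIdeal R ^ n := by
    induction k with
    | zero => simp
    | succ k ih =>
      rw [← sub_add_sub_cancel _ (seq (n + k))]
      exact add_mem (Ideal.pow_le_pow_right (Nat.le_add_right n k) (hb_sub _ _ (hseq _))) ih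
  obtain ⟨a, ha⟩ := IsPrecomplete.prec (I := maximalIdeal R) ‹_› (f := seq) fun {n m} h => by
    obtain ⟨k, rfl⟩ := Nat.exists_eq_add_of_le h
    simpa [SModEq.sub_mem] using neg_mem (hcauchy n k)
  refine ⟨a, LinearMap.ext fun v => ?_⟩
  obtain ⟨n, hn⟩ := he.exists_pow_smul_eq_zero v
  have hsub : seq n - a ∈ maximalIdeal R ^ n := by simpa [SModEq.sub_mem] using ha n
  rw [hseq n v hn, LinearMap.smul_apply, LinearMap.id_apply, ← sub_eq_zero, ← sub_smul, hn _ hsub]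

theorem exists_finset_iInf_ker_eq_bot [IsArtinian R V] :
    ∃ s : Finset (V →ₗ[R] E), ⨅ f ∈ s, LinearMap.ker f = ⊥ := by
  classical
  obtain ⟨_, ⟨s, rfl⟩, hs⟩ := wellFounded_lt.has_min
    (Set.range fun s : Finset (V →ₗ[R] E) => ⨅ f ∈ s, LinearMap.ker f) (Set.range_nonempty _)
  refine ⟨s, (Submodule.eq_bot_iff _).2 fun v hv => ?_⟩
  by_contra hv0
  obtain ⟨f, hf⟩ := he.exists_linearMap_apply_eq hv0
  refine hs _ ⟨insert f s, rfl⟩ (lt_of_le_of_ne ?_ fun h => he.ne_zero ?_)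
  · exact (Finset.iInf_insert f s LinearMap.ker).trans_le inf_le_right
  · exact hf ▸ inf_eq_right.1 ((Finset.iInf_insert f s LinearMap.ker).symm.trans h) hv

theorem finite_linearMap [IsNoetherianRing R] [IsPrecomplete (maximalIdeal R) R]
    [IsArtinian R V] : Module.Finite R (V →ₗ[R] E) := by
  classical
  have := he.injective
  obtain ⟨s, hs⟩ := he.exists_finset_iInf_ker_eq_bot (V := V)
  refine ⟨s, (Submodule.eq_top_iff').2 fun h => ?_⟩
  obtain ⟨g, hg⟩ := exists_extension_of_ker_le (LinearMap.pi fun f : s => (f : V →ₗ[R] E)) h <| by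
    rw [LinearMap.ker_pi, iInf_subtype, hs]
    exact bot_le
  have hcoord (f : s) := he.exists_eq_smul_id (g ∘ₗ LinearMap.single R (fun _ => E) f)
  choose a ha using hcoord
  have hsum : h = ∑ f : s, a f • (f : V →ₗ[R] E) := LinearMap.ext fun v => by
    rw [← hg, ← Finset.univ_sum_single (LinearMap.pi _ v), map_sum, LinearMap.sum_apply]
    exact Finset.sum_congr rfl fun f _ => LinearMap.congr_fun (ha f) _
  exact hsum ▸ sum_mem fun f _ => Submodule.smul_mem _ _ (Submodule.subset_span f.2)

end IsResidueFieldHull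

end Matlis

section CayleyHamilton

variable {R : Type u} [CommRing R]

theorem exists_pow_sub_mul_smul_eq_zero {D : Type v} [AddCommGroup D] [Module R D]
    [Module.Finite R D] {c y : R} (h : ∀ f : D, ∃ g : D, y • g = c • f) :
    ∃ (n : ℕ) (r : R), ∀ f : D, (c ^ n - y * r) • f = 0 := by
  obtain ⟨p, hmonic, -, hcoeff, hp⟩ :=
    LinearMap.exists_monic_and_natDegree_eq_and_coeff_mem_pow_and_aeval_eq_zero R
      (c • LinearMap.id : D →ₗ[R] D) (Ideal.span {y}) <| by
        rintro _ ⟨f, rfl⟩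
        obtain ⟨g, hg⟩ := h f
        simpa only [LinearMap.smul_apply, LinearMap.id_apply, ← hg] using
          Submodule.smul_mem_smul (Ideal.mem_span_singleton_self y) Submodule.mem_top
  have hlow : ∑ i ∈ Finset.range p.natDegree, p.coeff i * c ^ i ∈ Ideal.span {y} :=
    sum_mem fun i hi => Ideal.mul_mem_right _ _ <|
      Ideal.pow_le_self (Nat.sub_ne_zero_of_lt (Finset.mem_range.1 hi)) (hcoeff i)
  obtain ⟨r, hr⟩ := Ideal.mem_span_singleton'.1 hlow
  have heval : p.eval c = c ^ p.natDegree + y * r := by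
    rw [Polynomial.eval_eq_sum_range, Finset.sum_range_succ, hmonic.coeff_natDegree, one_mul,
      ← hr, mul_comm r, add_comm]
  refine ⟨p.natDegree, -r, fun f => ?_⟩
  have hkill : p.eval c • f = 0 := by
    have hcoe : (c • LinearMap.id : D →ₗ[R] D) = algebraMap R (Module.End R D) c := rfl
    rw [hcoe, Polynomial.aeval_algebraMap_apply] at hp
    exact LinearMap.congr_fun hp f
  rwa [mul_neg, sub_neg_eq_add, ← heval]

variable [IsNoetherianRing R] [IsLocalRing R] [IsPrecomplete (maximalIdeal R) R]

theorem exists_pow_sub_mul_smul_eq_zero_of_isArtinian {V : Type u} [AddCommGroup V] [Module R V]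
    [IsArtinian R V] {c y : R} (h : ∀ v : V, y • v = 0 → c • v = 0) :
    ∃ (n : ℕ) (r : R), ∀ v : V, (c ^ n - y * r) • v = 0 := by
  obtain ⟨E, _, _, e, he⟩ := exists_isResidueFieldHull R
  have := he.injective
  have := he.finite_linearMap (V := V)
  obtain ⟨n, r, hr⟩ := exists_pow_sub_mul_smul_eq_zero (D := V →ₗ[R] E) (c := c) (y := y)
    fun f => by
      obtain ⟨g, hg⟩ := exists_extension_of_ker_le (LinearMap.lsmul R V y) (c • f) fun v hv => by
        rw [LinearMap.mem_ker, LinearMap.smul_apply, ← map_smul, h v hv, map_zero]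
      exact ⟨g, LinearMap.ext fun v => by simpa using hg v⟩
  refine ⟨n, r, fun v => ?_⟩
  by_contra hv
  obtain ⟨f, hf⟩ := he.exists_linearMap_apply_eq hv
  rw [map_smul] at hf
  exact he.ne_zero (hf.symm.trans (LinearMap.congr_fun (hr f) v))

end CayleyHamilton

/-! ### The Hartshorne–Lichtenbaum vanishing theorem -/

section HartshorneLichtenbaum

theorem ringKrullDim_quotient_succ_le_of_lt {R : Type u} [CommRing R] {p q : Ideal R} [q.IsPrime]
    (h : q < p) : ringKrullDim (R ⧸ p) + 1 ≤ ringKrullDim (R ⧸ q) := by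
  obtain ⟨r, hrp, hrq⟩ := SetLike.exists_of_lt h
  refine ringKrullDim_succ_le_of_surjective (Ideal.Quotient.factor h.le)
    (Ideal.Quotient.factor_surjective h.le) (r := Ideal.Quotient.mk q r) ?_ ?_
  · exact mem_nonZeroDivisors_of_ne_zero (mt Ideal.Quotient.eq_zero_iff_mem.1 hrq)
  · exact Ideal.Quotient.eq_zero_iff_mem.2 hrp

theorem lt_of_annihilator_quotSMulTop_le {R : Type u} [CommRing R] {p q : Ideal R} {y : R}
    (hy : y ∉ q) (h : Module.annihilator R (QuotSMulTop y (R ⧸ q)) ≤ p) : q < p := by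
  refine lt_of_le_not_ge (le_trans ?_ h) fun hpq => hy (hpq (h ?_))
  · exact Ideal.annihilator_quotient.ge.trans
      (LinearMap.annihilator_le_of_surjective _ (Submodule.mkQ_surjective _))
  · exact QuotSMulTop.mem_annihilator _ y

variable {R : Type u} [CommRing R] [IsNoetherianRing R] {N : Type u} [AddCommGroup N] [Module R N]
  [Module.Finite R N]

namespace TopCohomology

theorem exists_notMem_smul_eq_zero (P : Ideal R) [P.IsPrime] (l : List R)
    (h : ∀ p : Ideal R, p.IsPrime → Module.annihilator R N ≤ p →
      ¬ p ≤ P ∨ Subsingleton (TopCohomology (R ⧸ p) l)) :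
    ∃ c ∉ P, ∀ w : TopCohomology N l, c • w = 0 := by
  refine IsNoetherianRing.induction_on_isQuotientEquivQuotientPrime R ‹_›
    (motive := fun N _ _ _ => (∀ p : Ideal R, p.IsPrime → Module.annihilator R N ≤ p →
      ¬ p ≤ P ∨ Subsingleton (TopCohomology (R ⧸ p) l)) →
        ∃ c ∉ P, ∀ w : TopCohomology N l, c • w = 0)
    (fun N _ _ _ _ _ => ?_) (fun N _ _ _ p e hN => ?_)
    (fun N₁ _ _ _ N₂ _ _ _ N₃ _ _ _ f g hf hg hfg h₁ h₃ h₂ => ?_) h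
  · have := subsingleton_of_subsingleton (M := N) l
    exact ⟨1, P.ne_top_iff_one.1 (Ideal.IsPrime.ne_top ‹_›), fun w => Subsingleton.elim _ _⟩
  · have hann : Module.annihilator R N = p.asIdeal :=
      e.annihilator_eq.trans Ideal.annihilator_quotient
    rcases hN p.asIdeal p.2 hann.le with hp | hp
    · obtain ⟨c, hcp, hcP⟩ := SetLike.not_le_iff_exists.1 hp
      exact ⟨c, hcP, smul_eq_zero_of_forall (Module.mem_annihilator.1 (hann ▸ hcp)) l⟩
    · have := subsingleton_of_surjective (f := e.symm.toLinearMap) e.symm.surjective l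
      exact ⟨1, P.ne_top_iff_one.1 (Ideal.IsPrime.ne_top ‹_›), fun w => Subsingleton.elim _ _⟩
  · obtain ⟨c₁, hc₁P, hc₁⟩ := h₁ fun p hp hle =>
      h₂ p hp ((f.annihilator_le_of_injective hf).trans hle)
    obtain ⟨c₃, hc₃P, hc₃⟩ := h₃ fun p hp hle =>
      h₂ p hp ((g.annihilator_le_of_surjective hg).trans hle)
    refine ⟨c₁ * c₃, Ideal.IsPrime.mul_notMem ‹_› hc₁P hc₃P, fun w => ?_⟩
    obtain ⟨v, hv⟩ := (map_exact hfg hg l (c₃ • w)).1 (by rw [map_smul, hc₃])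
    rw [mul_smul, ← hv, ← map_smul, hc₁, map_zero]

theorem subsingleton_of_forall_smul_eq_zero {r : R} (hr : IsSMulRegular N r) {l : List R}
    (hdim : Module.supportDim R N ≤ l.length) (h : ∀ w : TopCohomology N l, r • w = 0) :
    Subsingleton (TopCohomology N l) := by
  have hquot : Subsingleton (TopCohomology (QuotSMulTop r N) l) := by
    have hsucc := Module.supportDim_quotSMulTop_succ_le_of_notMem_minimalPrimes (M := N)
      fun _ => hr.notMem_of_mem_minimalPrimes
    exact subsingleton_of_supportDim_lt (ENat.WithBot.add_one_le_natCast_iff.1 (hsucc.trans hdim))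
  refine subsingleton_of_forall_eq 0 fun w => ?_
  obtain ⟨v, rfl⟩ := (map_exact (exact_smul_id_mkQ r) (Submodule.mkQ_surjective _) l w).1
    (Subsingleton.elim _ _)
  rw [map_smul_id, LinearMap.smul_apply, LinearMap.id_apply, h]

variable [IsLocalRing R] [IsPrecomplete (maximalIdeal R) R]

/-- If `c ∉ P` annihilates the top local cohomology of `N / y N`, then it annihilates the
`y`-torsion of that of `N`, so that `c ^ n - y r ∉ P` annihilates the latter for some `r`. -/
theorem exists_notMem_smul_eq_zero_cons {P : Ideal R} [P.IsPrime] {y : R} (hy : y ∈ P)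
    {l : List R} (hdim : Module.supportDim R N ≤ (y :: l).length) {c : R} (hcP : c ∉ P)
    (hc : ∀ w : TopCohomology (QuotSMulTop y N) l, c • w = 0) :
    ∃ c' ∉ P, ∀ w : TopCohomology N (y :: l), c' • w = 0 := by
  obtain ⟨θ, hθ⟩ := exists_torsionBy_le_range (M := N) y l
  have := isArtinian_of_supportDim_le hdim
  obtain ⟨n, r, hr⟩ := exists_pow_sub_mul_smul_eq_zero_of_isArtinian
    (V := TopCohomology N (y :: l)) (c := c) (y := y) fun v hv => by
      obtain ⟨w, rfl⟩ := hθ hv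
      rw [← map_smul, hc, map_zero]
  refine ⟨c ^ n - y * r, fun h => hcP (Ideal.IsPrime.mem_of_pow_mem ‹_› n ?_), hr⟩
  simpa using add_mem h (Ideal.mul_mem_right r P hy)

end TopCohomology

/-- The image of the list `l` in `R ⧸ p` is a system of parameters of `R ⧸ p`. -/
def IsSystemOfParametersMod {R : Type u} [CommRing R] [IsLocalRing R] (l : List R) (p : Ideal R) :
    Prop :=
  ringKrullDim (R ⧸ p) = l.length ∧ (powIdeal l 1 ⊔ p).radical = maximalIdeal R

omit [IsNoetherianRing R] in
theorem exists_isPrime_not_maximalIdeal_le [IsLocalRing R] {J : Ideal R} (hJ : J ≤ maximalIdeal R)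
    (h : J.radical ≠ maximalIdeal R) : ∃ P : Ideal R, P.IsPrime ∧ J ≤ P ∧ ¬ maximalIdeal R ≤ P := by
  by_contra! hcon
  refine h (le_antisymm ((maximalIdeal.isMaximal R).isPrime.radical_le_iff.2 hJ) ?_)
  rw [Ideal.radical_eq_sInf]
  exact le_sInf fun P ⟨hJP, hP⟩ => hcon P hP hJP

variable [IsLocalRing R] [IsPrecomplete (maximalIdeal R) R]

theorem TopCohomology.subsingleton_quotient_of_not_isSystemOfParametersMod (l : List R)
    (q : Ideal R) [q.IsPrime] (hdim : ringKrullDim (R ⧸ q) ≤ l.length)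
    (hq : ¬ IsSystemOfParametersMod l q) : Subsingleton (TopCohomology (R ⧸ q) l) := by
  induction l generalizing q with
  | nil =>
    have := isMaximal_of_ringKrullDim_quotient_le_zero hdim
    refine (hq ⟨hdim.antisymm ringKrullDim_nonneg_of_nontrivial, ?_⟩).elim
    rw [powIdeal_nil, bot_sup_eq, Ideal.IsPrime.radical ‹_›, eq_maximalIdeal this]
  | cons y l ih =>
    by_cases hunit : ∃ z ∈ y :: l, IsUnit z
    · exact hunit.elim fun z hz => subsingleton_of_isUnit_of_mem hz.1 hz.2
    push Not at hunit
    have hsupp := (Module.supportDim_quotient_eq_ringKrullDim q).trans_le hdim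
    rcases hdim.lt_or_eq with hlt | heq
    · exact subsingleton_of_supportDim_lt
        ((Module.supportDim_quotient_eq_ringKrullDim q).trans_lt hlt)
    by_cases hyq : y ∈ q
    · exact subsingleton_cons_of_forall_smul_eq_zero (smul_quotient_eq_zero hyq) l
    obtain ⟨P, hP, hJP, hPm⟩ := exists_isPrime_not_maximalIdeal_le
      (sup_le (powIdeal_one_le_iff.2 hunit) (le_maximalIdeal (Ideal.IsPrime.ne_top ‹_›)))
      fun h => hq ⟨heq, h⟩
    have hyP : y ∈ P := powIdeal_one_le_iff.1 (le_sup_left.trans hJP) y List.mem_cons_self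
    obtain ⟨c, hcP, hc⟩ := exists_notMem_smul_eq_zero (N := QuotSMulTop y (R ⧸ q)) P l
      fun p _ hle => by
        have hdimp := (ringKrullDim_quotient_succ_le_of_lt
          (lt_of_annihilator_quotSMulTop_le hyq hle)).trans hdim
        rw [List.length_cons, Nat.cast_succ, ENat.WithBot.add_le_add_one_right_iff] at hdimp
        by_cases hsop : IsSystemOfParametersMod l p
        · refine Or.inl fun hpP => hPm (hsop.2.ge.trans (hP.radical_le_iff.2 (sup_le ?_ hpP)))
          exact powIdeal_one_le_iff.2 fun z hz =>
            powIdeal_one_le_iff.1 (le_sup_left.trans hJP) z (List.mem_cons_of_mem y hz)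
        · exact Or.inr (ih p hdimp hsop)
    obtain ⟨c', hc'P, hc'⟩ := exists_notMem_smul_eq_zero_cons hyP hsupp hcP hc
    have hc'q : c' ∉ q := fun h => hc'P (hJP (Ideal.mem_sup_right h))
    exact subsingleton_of_forall_smul_eq_zero (isSMulRegular_quotient hc'q) hsupp hc'

end HartshorneLichtenbaum

/-! ### Differential modules -/

section Differential

variable {R : Type u} [CommRing R] {K K' K'' : Type v} [AddCommGroup K] [Module R K]
  [AddCommGroup K'] [Module R K'] [AddCommGroup K''] [Module R K'']

/-- The homology `ker D / (im D ∩ ker D)` of an endomorphism `D`, meant for `D ∘ D = 0`. Ungraded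
complexes suffice here, since only finiteness properties of the total homology matter. -/
abbrev Homology (D : K →ₗ[R] K) : Type v :=
  LinearMap.ker D ⧸ (LinearMap.range D).comap (LinearMap.ker D).subtype

theorem isArtinian_range_of_ker_le {W A B : Type*} [AddCommGroup W] [Module R W]
    [AddCommGroup A] [Module R A] [AddCommGroup B] [Module R B] [IsArtinian R A]
    {π : W →ₗ[R] A} {φ : W →ₗ[R] B} (h : LinearMap.ker π ≤ LinearMap.ker φ) :
    IsArtinian R (LinearMap.range φ) := by
  have : IsArtinian R (W ⧸ LinearMap.ker π) :=
    isArtinian_of_linearEquiv π.quotKerEquivRange.symm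
  have hrange := isArtinian_of_surjective _ (Submodule.liftQ _ φ h).rangeRestrict
    (LinearMap.surjective_rangeRestrict _)
  rwa [Submodule.range_liftQ] at hrange

namespace Homology

theorem mk_eq_zero_iff {D : K →ₗ[R] K} {z : LinearMap.ker D} :
    (Submodule.Quotient.mk z : Homology D) = 0 ↔ ∃ e, D e = z :=
  Submodule.Quotient.mk_eq_zero _

/-- The map induced on homology by a morphism of differential modules. -/
noncomputable def map {D : K →ₗ[R] K} {D' : K' →ₗ[R] K'} (f : K →ₗ[R] K')
    (hf : ∀ z, f (D z) = D' (f z)) : Homology D →ₗ[R] Homology D' :=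
  Submodule.mapQ _ _
    (f.restrict (p := LinearMap.ker D) (q := LinearMap.ker D') fun z hz => by
      rw [LinearMap.mem_ker, ← hf, LinearMap.mem_ker.1 hz, map_zero])
    fun _ ⟨e, he⟩ => ⟨f e, by rw [← hf, he]; rfl⟩

theorem map_exact {D : K →ₗ[R] K} {D' : K' →ₗ[R] K'} {D'' : K'' →ₗ[R] K''}
    (hD' : ∀ z, D' (D' z) = 0) {f : K →ₗ[R] K'} {g : K' →ₗ[R] K''}
    (hf : ∀ z, f (D z) = D' (f z)) (hg : ∀ z, g (D' z) = D'' (g z))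
    (hinj : Function.Injective f) (hsurj : Function.Surjective g) (hex : Function.Exact f g) :
    Function.Exact (map f hf) (map g hg) := by
  intro w
  obtain ⟨⟨z, hz⟩, rfl⟩ := Submodule.Quotient.mk_surjective _ w
  constructor
  · intro h
    obtain ⟨e, he⟩ := mk_eq_zero_iff.1 h
    obtain ⟨e, rfl⟩ := hsurj e
    obtain ⟨a, ha⟩ := (hex (z - D' e)).1 (by rw [map_sub, hg, he]; exact sub_self _)
    have hDa : D a = 0 := hinj <| by
      rw [hf, ha, map_sub, hD', LinearMap.mem_ker.1 hz, sub_zero, map_zero]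
    refine ⟨Submodule.Quotient.mk ⟨a, hDa⟩, (Submodule.Quotient.eq _).2 ⟨-e, ?_⟩⟩
    change D' (-e) = f a - z
    rw [ha, map_neg]
    abel
  · rintro ⟨v, hv⟩
    obtain ⟨⟨a, ha⟩, rfl⟩ := Submodule.Quotient.mk_surjective _ v
    rw [← hv]
    exact mk_eq_zero_iff.2 ⟨0, by rw [map_zero]; exact (hex.apply_apply_eq_zero a).symm⟩

/-- The `y`-torsion of `H(K)` is the image of the connecting homomorphism from `H(K')` in the long
exact sequence of `0 → K --y--> K --g--> K' → 0`. The connecting homomorphism is presented by the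
pairs `(e, k)` with `D e = y • k`, which represent `[g e] ↦ [k]`. -/
theorem isArtinian_torsionBy {D : K →ₗ[R] K} {D' : K' →ₗ[R] K'} (hD : ∀ z, D (D z) = 0)
    {y : R} (hy : IsSMulRegular K y) {g : K →ₗ[R] K'} (hg : ∀ z, g (D z) = D' (g z))
    (hsurj : Function.Surjective g) (hex : Function.Exact (y • LinearMap.id : K →ₗ[R] K) g)
    [IsArtinian R (Homology D')] : IsArtinian R (Submodule.torsionBy R (Homology D) y) := by
  let W : Submodule R (K × K) := LinearMap.ker (D.coprod (-y • LinearMap.id))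
  have hW (c : W) : D c.1.1 = y • c.1.2 := by
    simpa [W, add_neg_eq_zero] using c.2
  have hWg (c : W) : D' (g c.1.1) = 0 := by
    rw [← hg, hW]
    exact hex.apply_apply_eq_zero _
  have hWy (c : W) : D c.1.2 = 0 := hy <| by
    simp only [← map_smul, ← hW, hD, smul_zero]
  let π : W →ₗ[R] Homology D' := Submodule.mkQ _ ∘ₗ
    (g ∘ₗ LinearMap.fst R K K ∘ₗ W.subtype).codRestrict (LinearMap.ker D') hWg
  let φ : W →ₗ[R] Homology D := Submodule.mkQ _ ∘ₗ
    (LinearMap.snd R K K ∘ₗ W.subtype).codRestrict (LinearMap.ker D) hWy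
  have hker : LinearMap.ker π ≤ LinearMap.ker φ := by
    intro c hc
    obtain ⟨e, he⟩ := mk_eq_zero_iff.1 (LinearMap.mem_ker.1 hc)
    obtain ⟨e, rfl⟩ := hsurj e
    obtain ⟨k, hk⟩ := (hex (c.1.1 - D e)).1 (by rw [map_sub, hg, he]; exact sub_self _)
    refine mk_eq_zero_iff.2 ⟨k, hy ?_⟩
    change y • D k = y • c.1.2
    rw [← hW, ← map_smul, show y • k = _ from hk, map_sub, hD, sub_zero]
  have := isArtinian_range_of_ker_le hker
  suffices Submodule.torsionBy R (Homology D) y ≤ LinearMap.range φ from isArtinian_of_le this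
  intro w hw
  obtain ⟨⟨z, hz⟩, rfl⟩ := Submodule.Quotient.mk_surjective _ w
  obtain ⟨e, he⟩ := mk_eq_zero_iff.1 ((Submodule.mem_torsionBy_iff _ _).1 hw)
  exact ⟨⟨(e, z), by simp [W, show D e = y • z from he]⟩, rfl⟩

theorem exists_stable_pow_smul (x : R) {D : K →ₗ[R] K} [IsArtinian R (Homology D)] :
    ∃ j₀, ∀ j ≥ j₀, ∀ z, D z = 0 → ∃ c e, x ^ j₀ • z = x ^ j • c + D e := by
  obtain ⟨j₀, hj₀⟩ := (LinearMap.eventually_iInf_range_pow_eq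
    (algebraMap R (Module.End R (Homology D)) x)).exists_forall_of_atTop
  refine ⟨j₀, fun j hj z hz => ?_⟩
  have hrange := (hj₀ j₀ le_rfl).symm.trans (hj₀ j hj)
  obtain ⟨c, hc⟩ := hrange.le ⟨Submodule.Quotient.mk ⟨z, hz⟩, rfl⟩
  obtain ⟨c, rfl⟩ := Submodule.Quotient.mk_surjective _ c
  rw [← map_pow, ← map_pow, Module.algebraMap_end_apply, Module.algebraMap_end_apply,
    ← Submodule.Quotient.mk_smul, ← Submodule.Quotient.mk_smul, eq_comm,
    Submodule.Quotient.eq] at hc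
  obtain ⟨e, he⟩ := hc
  exact ⟨c, e, by rw [he]; simp⟩

end Homology

end Differential

/-! ### The Čech complex -/

section Cone

variable {R : Type u} [CommRing R] {K K' K'' : Type u} [AddCommGroup K] [Module R K]
  [AddCommGroup K'] [Module R K'] [AddCommGroup K''] [Module R K'']

/-- The differential of the cone `K × K_y` of the localization map `K → K_y`, where `(K, D)` is a
differential module. -/
noncomputable def cone (y : R) (D : K →ₗ[R] K) :
    K × LocalizedModule.Away y K →ₗ[R] K × LocalizedModule.Away y K :=
  (D ∘ₗ LinearMap.fst R K _).prod
    (fraction y 0 ∘ₗ LinearMap.fst R K _ - awayMap y D ∘ₗ LinearMap.snd R K _)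

theorem cone_apply (y : R) (D : K →ₗ[R] K) (a : K) (b : LocalizedModule.Away y K) :
    cone y D (a, b) = (D a, fraction y 0 a - awayMap y D b) := rfl

theorem cone_cone {D : K →ₗ[R] K} (hD : ∀ z, D (D z) = 0) (y : R)
    (z : K × LocalizedModule.Away y K) : cone y D (cone y D z) = 0 := by
  obtain ⟨a, b⟩ := z
  obtain ⟨n, b, rfl⟩ := exists_fraction_eq y b
  simp [cone_apply, hD]

/-- The map of cones induced by a linear map `K → K'`. -/
noncomputable def coneMap (y : R) (f : K →ₗ[R] K') :
    K × LocalizedModule.Away y K →ₗ[R] K' × LocalizedModule.Away y K' :=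
  f.prodMap (awayMap y f)

theorem coneMap_cone {D : K →ₗ[R] K} {D' : K' →ₗ[R] K'} {f : K →ₗ[R] K'}
    (hf : ∀ z, f (D z) = D' (f z)) (y : R) (z : K × LocalizedModule.Away y K) :
    coneMap y f (cone y D z) = cone y D' (coneMap y f z) := by
  obtain ⟨a, b⟩ := z
  obtain ⟨n, b, rfl⟩ := exists_fraction_eq y b
  simp [cone_apply, coneMap, hf]

theorem coneMap_exact {f : K →ₗ[R] K'} {g : K' →ₗ[R] K''} (h : Function.Exact f g) (y : R) :
    Function.Exact (coneMap y f) (coneMap y g) := by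
  rintro ⟨a, b⟩
  simp only [coneMap, LinearMap.prodMap_apply, Prod.mk_eq_zero, h a, awayMap_exact y h b,
    Set.mem_range, Prod.exists, Prod.mk.injEq]
  exact ⟨fun ⟨⟨a, ha⟩, b, hb⟩ => ⟨a, b, ha, hb⟩, fun ⟨a, b, ha, hb⟩ => ⟨⟨a, ha⟩, b, hb⟩⟩

theorem awayMap_smul_id (y r : R) :
    awayMap y (r • LinearMap.id : K →ₗ[R] K) = r • LinearMap.id := by
  ext w
  obtain ⟨n, z, rfl⟩ := exists_fraction_eq y w
  simp

theorem exists_cone_eq_pow_smul_of_cone_eq_zero {y : R} {D : K →ₗ[R] K}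
    {z : K × LocalizedModule.Away y K} (hz : cone y D z = 0) :
    ∃ n e, cone y D e = y ^ n • z := by
  obtain ⟨a, b⟩ := z
  obtain ⟨n, b, rfl⟩ := exists_fraction_eq y b
  simp only [cone_apply, awayMap_fraction, Prod.mk_eq_zero, sub_eq_zero] at hz
  have hab : fraction y n (y ^ n • a - D b) = 0 := by
    rw [map_sub, map_smul, pow_smul_fraction, hz.2, sub_self]
  obtain ⟨k, hk⟩ := exists_pow_smul_eq_zero_of_fraction_eq_zero y hab
  rw [smul_sub, sub_eq_zero, smul_smul, ← pow_add, ← map_smul] at hk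
  refine ⟨k + n, (y ^ k • b, 0), ?_⟩
  rw [cone_apply, ← hk, map_zero, sub_zero, map_smul, Prod.smul_mk, pow_add, mul_smul _ _
    (fraction y n b), pow_smul_fraction]

theorem exists_cone_eq_pow_smul {r : R} {D : K →ₗ[R] K}
    (hr : ∀ z, D z = 0 → ∃ n e, D e = r ^ n • z) {y : R} {z : K × LocalizedModule.Away y K}
    (hz : cone y D z = 0) : ∃ n e, cone y D e = r ^ n • z := by
  obtain ⟨a, b⟩ := z
  simp only [cone_apply, Prod.mk_eq_zero, sub_eq_zero] at hz
  obtain ⟨ha, hb⟩ := hz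
  obtain ⟨n, c, hc⟩ := hr a ha
  obtain ⟨m, d, hd⟩ := exists_fraction_eq y (r ^ n • b - fraction y 0 c)
  have hDd : fraction y m (D d) = 0 := by
    rw [← awayMap_fraction, hd, map_sub, map_smul, ← hb, awayMap_fraction, hc, map_smul, sub_self]
  obtain ⟨k, hk⟩ := exists_pow_smul_eq_zero_of_fraction_eq_zero y hDd
  obtain ⟨j, e, he⟩ := hr (y ^ k • d) (by rw [map_smul, hk])
  refine ⟨j + n, (r ^ j • c, -fraction y (m + k) e), ?_⟩
  rw [cone_apply, map_neg, awayMap_fraction, he, map_smul, map_smul, map_smul,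
    fraction_add_pow_smul, hd, hc, smul_smul, ← pow_add, Prod.smul_mk, smul_sub, smul_smul,
    ← pow_add, sub_neg_eq_add, add_sub_cancel]

/-- The class of `z / y ^ n` in the second component of the cone of `K → K_y`. -/
noncomputable def coneMk (y : R) (n : ℕ) : K →ₗ[R] K × LocalizedModule.Away y K :=
  LinearMap.inr R K _ ∘ₗ fraction y n

theorem coneMk_apply (y : R) (n : ℕ) (z : K) : coneMk y n z = (0, fraction y n z) := rfl

theorem pow_smul_coneMk_add (y : R) (n k : ℕ) (z : K) :
    y ^ k • coneMk y (n + k) z = coneMk y n z := by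
  rw [coneMk_apply, Prod.smul_mk, pow_smul_fraction_add, smul_zero, coneMk_apply]

theorem cone_coneMk (y : R) {D : K →ₗ[R] K} (n : ℕ) {z : K} (hz : D z = 0) :
    cone y D (coneMk y n z) = 0 := by
  simp [cone_apply, coneMk_apply, hz]

theorem cone_neg_fraction (y : R) {D : K →ₗ[R] K} (n : ℕ) {a : K} (ha : D a = 0) (e : K) :
    cone y D (a, -fraction y n e) = coneMk y n (y ^ n • a + D e) := by
  simp [cone_apply, coneMk_apply, ha, pow_smul_fraction]

theorem cone_prodMk_zero (y : R) {D : K →ₗ[R] K} (n : ℕ) {a : K} (ha : D a = 0) :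
    cone y D (a, 0) = y ^ n • coneMk y n a := by
  simp [cone_apply, coneMk_apply, ha, pow_smul_fraction]

end Cone

section Cech

variable {R : Type u} [CommRing R] {M M' M'' : Type u} [AddCommGroup M] [Module R M]
  [AddCommGroup M'] [Module R M'] [AddCommGroup M''] [Module R M'']

variable (M) in
/-- The total module of the Čech complex of `M` with respect to a list, built one element at a time
as the cone of the localization map. -/
noncomputable def Cech : List R → ModuleCat.{u} R
  | [] => ModuleCat.of R M
  | y :: l => ModuleCat.of R (Cech l × LocalizedModule.Away y (Cech l))

namespace Cech

/-- The differential of the Čech complex. -/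
noncomputable def differential : (l : List R) → Cech M l →ₗ[R] Cech M l
  | [] => 0
  | y :: l => cone y (differential l)

theorem differential_differential (l : List R) (z : Cech M l) :
    differential l (differential l z) = 0 := by
  induction l with
  | nil => rfl
  | cons y l ih => exact cone_cone ih y z

/-- The map of Čech complexes induced by a linear map. -/
noncomputable def map (f : M →ₗ[R] M') : (l : List R) → Cech M l →ₗ[R] Cech M' l
  | [] => f
  | y :: l => coneMap y (map f l)

theorem map_injective {f : M →ₗ[R] M'} (hf : Function.Injective f) (l : List R) :
    Function.Injective (map f l) := by
  induction l with
  | nil => exact hf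
  | cons y l ih => exact ih.prodMap (awayMap_injective y ih)

theorem map_surjective {f : M →ₗ[R] M'} (hf : Function.Surjective f) (l : List R) :
    Function.Surjective (map f l) := by
  induction l with
  | nil => exact hf
  | cons y l ih => exact ih.prodMap (awayMap_surjective y ih)

theorem map_exact {f : M →ₗ[R] M'} {g : M' →ₗ[R] M''} (h : Function.Exact f g) (l : List R) :
    Function.Exact (map f l) (map g l) := by
  induction l with
  | nil => exact h
  | cons y l ih => exact coneMap_exact ih y

theorem map_smul_id (r : R) (l : List R) :
    map (r • LinearMap.id : M →ₗ[R] M) l = r • LinearMap.id := by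
  induction l with
  | nil => rfl
  | cons y l ih => rw [map, ih, coneMap, awayMap_smul_id]; rfl

theorem map_differential (f : M →ₗ[R] M') (l : List R) (z : Cech M l) :
    map f l (differential l z) = differential l (map f l z) := by
  induction l with
  | nil => exact map_zero f
  | cons y l ih => exact coneMap_cone ih y z

theorem smul_eq_zero_of_forall {r : R} (h : ∀ u : M, r • u = 0) (l : List R) (z : Cech M l) :
    r • z = 0 := by
  have hex : Function.Exact ((1 : R) • LinearMap.id : M →ₗ[R] M) (r • LinearMap.id : M →ₗ[R] M) :=
    fun u => by simp [h]
  have hz := (map_exact hex l).apply_apply_eq_zero z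
  rwa [map_smul_id, map_smul_id, one_smul] at hz

theorem exists_differential_eq_pow_smul {l : List R} {y : R} (hy : y ∈ l) {z : Cech M l}
    (hz : differential l z = 0) : ∃ n e, differential l e = y ^ n • z := by
  induction l with
  | nil => simp at hy
  | cons x l ih =>
    rcases List.mem_cons.1 hy with rfl | hy
    · exact exists_cone_eq_pow_smul_of_cone_eq_zero hz
    · exact exists_cone_eq_pow_smul (fun _ => ih hy) hz

/-- The Čech cochain `u / (x₁ ⋯ x_r) ^ n` in the top degree. -/
noncomputable def mk : (l : List R) → (n : ℕ) → M →ₗ[R] Cech M l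
  | [], _ => LinearMap.id
  | y :: l, n => coneMk y n ∘ₗ mk l n

theorem prod_pow_smul_mk_add (l : List R) (n k : ℕ) (u : M) :
    l.prod ^ k • mk l (n + k) u = mk l n u := by
  induction l with
  | nil => simp [mk]
  | cons y l ih =>
    change (y * l.prod) ^ k • coneMk y (n + k) (mk l (n + k) u) = coneMk y n (mk l n u)
    rw [mul_pow, mul_smul, ← map_smul (coneMk y (n + k)), ih, pow_smul_coneMk_add]

theorem differential_mk (l : List R) (n : ℕ) (u : M) : differential l (mk l n u) = 0 := by
  induction l with
  | nil => rfl
  | cons y l ih => exact cone_coneMk y n ih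

theorem exists_differential_eq_mk_of_mem {l : List R} {n : ℕ} {u : M}
    (hu : u ∈ powIdeal l n • (⊤ : Submodule R M)) : ∃ e, differential l e = mk l n u := by
  induction l generalizing u with
  | nil =>
    rw [powIdeal_nil, Submodule.bot_smul, Submodule.mem_bot] at hu
    exact ⟨0, by simp [hu]⟩
  | cons y l ih =>
    obtain ⟨a, b, hb, rfl⟩ := mem_powIdeal_cons_smul_top.1 hu
    obtain ⟨e, he⟩ := ih hb
    refine ⟨((mk l n a, -fraction y n e) : Cech M l × LocalizedModule.Away y _),
      (cone_neg_fraction y n (differential_mk l n a) e).trans ?_⟩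
    rw [he, ← map_smul, ← map_add]
    rfl

theorem exists_differential_eq_mk {l : List R} {n : ℕ} {u : M} (hu : u ∈ limitClosurePow M l n) :
    ∃ e, differential l e = mk l n u := by
  obtain ⟨k, hk⟩ := hu
  obtain ⟨e, he⟩ := exists_differential_eq_mk_of_mem hk
  exact ⟨e, by rw [he, map_smul, prod_pow_smul_mk_add]⟩

/-- The projection of the Čech complex onto the top local cohomology. -/
noncomputable def toTop : (l : List R) → Cech M l →ₗ[R] TopCohomology M l
  | [] => LinearMap.id
  | y :: l => Submodule.mkQ _ ∘ₗ awayMap y (toTop l) ∘ₗ LinearMap.snd R (Cech M l) _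

theorem toTop_differential (l : List R) (z : Cech M l) : toTop l (differential l z) = 0 := by
  induction l with
  | nil => exact map_zero _
  | cons y l ih =>
    obtain ⟨a, b⟩ := (z : Cech M l × LocalizedModule.Away y (Cech M l))
    obtain ⟨n, b, rfl⟩ := exists_fraction_eq y b
    change Submodule.mkQ _
      (awayMap y (toTop l) (fraction y 0 a - awayMap y (differential l) (fraction y n b))) = 0
    rw [map_sub, awayMap_fraction, awayMap_fraction, awayMap_fraction, ih, map_zero, sub_zero]
    exact AwayQuot.mk_zero y _

theorem toTop_mk (l : List R) (n : ℕ) (u : M) : toTop l (mk l n u) = TopCohomology.mk l n u := by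
  induction l with
  | nil => rfl
  | cons y l ih =>
    change Submodule.mkQ _ (awayMap y (toTop l) (fraction y n (mk l n u))) = _
    rw [awayMap_fraction, ih]
    rfl

end Cech

end Cech

section CechCohomology

variable {R : Type u} [CommRing R] (M : Type u) [AddCommGroup M] [Module R M] (l : List R)

/-- The total cohomology of the Čech complex. -/
abbrev CechCohomology : Type u :=
  Homology (Cech.differential l : Cech M l →ₗ[R] Cech M l)

namespace CechCohomology

variable {M l}

theorem exists_pow_smul_eq_zero {y : R} (hy : y ∈ l) (w : CechCohomology M l) :
    ∃ n, y ^ n • w = 0 := by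
  obtain ⟨⟨z, hz⟩, rfl⟩ := Submodule.Quotient.mk_surjective _ w
  obtain ⟨n, e, he⟩ := Cech.exists_differential_eq_pow_smul hy hz
  exact ⟨n, Homology.mk_eq_zero_iff.2 ⟨e, he⟩⟩

theorem isArtinian_of_forall_smul_eq_zero [IsArtinian R M] (h : ∀ y ∈ l, ∀ u : M, y • u = 0) :
    IsArtinian R (CechCohomology M l) := by
  suffices IsArtinian R (Cech M l) by infer_instance
  induction l with
  | nil => exact ‹IsArtinian R M›
  | cons y l ih =>
    have := ih fun z hz => h z (List.mem_cons_of_mem _ hz)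
    have : Subsingleton (LocalizedModule.Away y (Cech M l)) :=
      subsingleton_of_forall_eq 0 fun w => away_smul_injective y <| by
        obtain ⟨n, z, rfl⟩ := exists_fraction_eq y w
        simp only [smul_zero, ← map_smul,
          Cech.smul_eq_zero_of_forall (h y List.mem_cons_self), map_zero]
    exact (inferInstance : IsArtinian R (Cech M l × LocalizedModule.Away y (Cech M l)))

theorem isArtinian_of_exact {M' M'' : Type u} [AddCommGroup M'] [Module R M'] [AddCommGroup M'']
    [Module R M''] {f : M →ₗ[R] M'} {g : M' →ₗ[R] M''} (hf : Function.Injective f)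
    (hg : Function.Surjective g) (hfg : Function.Exact f g) [IsArtinian R (CechCohomology M l)]
    [IsArtinian R (CechCohomology M'' l)] : IsArtinian R (CechCohomology M' l) :=
  isArtinian_of_range_eq_ker _ _ <| Eq.symm <| LinearMap.exact_iff.1 <|
    Homology.map_exact (Cech.differential_differential l) (Cech.map_differential f l)
      (Cech.map_differential g l) (Cech.map_injective hf l) (Cech.map_surjective hg l)
      (Cech.map_exact hfg l)

theorem isArtinian_of_isArtinian_quotSMulTop {y : R} (hy : y ∈ l) (hreg : IsSMulRegular M y)
    [IsArtinian R (CechCohomology (QuotSMulTop y M) l)] : IsArtinian R (CechCohomology M l) := by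
  have hinj := Cech.map_injective (f := (y • LinearMap.id : M →ₗ[R] M)) (fun _ _ h => hreg h) l
  have hex := Cech.map_exact (TopCohomology.exact_smul_id_mkQ (M := M) y) l
  rw [Cech.map_smul_id] at hinj hex
  have := Homology.isArtinian_torsionBy (Cech.differential_differential l) hinj
    (Cech.map_differential _ l) (Cech.map_surjective (Submodule.mkQ_surjective _) l) hex
  exact isArtinian_of_isArtinian_torsionBy (exists_pow_smul_eq_zero hy)

variable [IsNoetherianRing R] [Module.Finite R M]

theorem isArtinian_of_forall_prime (h : ∀ p : Ideal R, p.IsPrime → Module.annihilator R M ≤ p →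
    IsArtinian R (CechCohomology (R ⧸ p) l)) : IsArtinian R (CechCohomology M l) := by
  refine IsNoetherianRing.induction_on_isQuotientEquivQuotientPrime R ‹_›
    (motive := fun N _ _ _ => (∀ p : Ideal R, p.IsPrime → Module.annihilator R N ≤ p →
      IsArtinian R (CechCohomology (R ⧸ p) l)) → IsArtinian R (CechCohomology N l))
    (fun N _ _ _ _ _ => ?_) (fun N _ _ _ p e hN => ?_)
    (fun N₁ _ _ _ N₂ _ _ _ N₃ _ _ _ f g hf hg hfg h₁ h₃ h₂ => ?_) h
  · exact isArtinian_of_forall_smul_eq_zero fun y _ u => Subsingleton.elim _ _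
  · have := hN p.asIdeal p.2 (e.annihilator_eq.trans Ideal.annihilator_quotient).le
    have := isArtinian_of_forall_smul_eq_zero (M := PUnit.{u + 1}) (l := l) fun _ _ _ => rfl
    exact isArtinian_of_exact (f := e.symm.toLinearMap) (g := (0 : N →ₗ[R] PUnit.{u + 1}))
      e.symm.injective (fun _ => ⟨0, rfl⟩) (fun u => ⟨fun _ => e.symm.surjective u, fun _ => rfl⟩)
  · have := h₁ fun p hp hle => h₂ p hp ((f.annihilator_le_of_injective hf).trans hle)
    have := h₃ fun p hp hle => h₂ p hp ((g.annihilator_le_of_surjective hg).trans hle)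
    exact isArtinian_of_exact hf hg hfg

theorem isArtinian_quotient (p : Ideal R) (hp : p.IsPrime)
    (h : ∀ q : Ideal R, q.IsPrime → p ≤ q → powIdeal l 1 ≤ q → q.IsMaximal) :
    IsArtinian R (CechCohomology (R ⧸ p) l) := by
  induction p using IsNoetherian.induction with
  | hgt p ih =>
    by_cases hl : powIdeal l 1 ≤ p
    · have : IsSimpleModule R (R ⧸ p) := isSimpleModule_iff_isCoatom.2 (h p hp le_rfl hl).out
      exact isArtinian_of_forall_smul_eq_zero fun y hy =>
        smul_quotient_eq_zero (powIdeal_one_le_iff.1 hl y hy)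
    obtain ⟨y, hyl, hyp⟩ : ∃ y ∈ l, y ∉ p := by simpa [powIdeal_one_le_iff] using hl
    have := isArtinian_of_forall_prime (M := QuotSMulTop y (R ⧸ p)) (l := l) fun q hq hle =>
      have hlt := lt_of_annihilator_quotSMulTop_le hyp hle
      ih q hlt hq fun q' hq' hqq' => h q' hq' (hlt.le.trans hqq')
    exact isArtinian_of_isArtinian_quotSMulTop hyl (isSMulRegular_quotient hyp)

theorem isArtinian (h : ∀ p : Ideal R, p.IsPrime → Module.annihilator R M ≤ p →
    powIdeal l 1 ≤ p → p.IsMaximal) : IsArtinian R (CechCohomology M l) :=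
  isArtinian_of_forall_prime fun p hp hle => isArtinian_quotient p hp fun q hq hpq =>
    h q hq (hle.trans hpq)

end CechCohomology

end CechCohomology

section Descent

variable {R : Type u} [CommRing R] {M : Type u} [AddCommGroup M] [Module R M]

theorem Cech.exists_cone_eq_coneMk {x : R} {l : List R} {n : ℕ} (j : ℕ) {u : M}
    (hu : u ∈ limitClosurePow M (x :: l) (n + j)) :
    ∃ v, cone x (differential l) v = coneMk x j (mk l n u) := by
  obtain ⟨v, hv⟩ : ∃ v, cone x (differential l) v = coneMk x (n + j) (mk l (n + j) u) :=
    exists_differential_eq_mk hu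
  refine ⟨(x ^ n * l.prod ^ j) • v, ?_⟩
  rw [map_smul, hv, mul_smul, ← map_smul (coneMk x (n + j)), prod_pow_smul_mk_add, add_comm n j,
    pow_smul_coneMk_add]

/-- The cochain `(u / l ^ n, 0)` and `x ^ j` times a primitive of `(0, (u / l ^ n) / x ^ j)` have
the same boundary, so that `x ^ j₀` moves their difference into `x ^ j` times the cocycles, up to a
boundary. -/
theorem Cech.exists_pow_smul_mk_eq {x : R} {l : List R} [IsArtinian R (CechCohomology M (x :: l))]
    {u : M} (hu : ∀ n, u ∈ limitClosurePow M (x :: l) n) : ∃ j₀, ∀ j ≥ j₀, ∀ n,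
      ∃ a e : Cech M l, x ^ j₀ • mk l n u = x ^ j • a + differential l e := by
  have : IsArtinian R (Homology (cone x (differential (M := M) l))) :=
    inferInstanceAs (IsArtinian R (CechCohomology M (x :: l)))
  obtain ⟨j₀, hj₀⟩ := Homology.exists_stable_pow_smul x (D := cone x (differential (M := M) l))
  refine ⟨j₀, fun j hj n => ?_⟩
  obtain ⟨v, hv⟩ := exists_cone_eq_coneMk j (hu (n + j))
  obtain ⟨c, e, h⟩ := hj₀ j hj ((mk l n u, 0) - x ^ j • v) (by
    rw [map_sub, map_smul, hv, cone_prodMk_zero x j (differential_mk l n u), sub_self])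
  have hfst : x ^ j₀ • (mk l n u - x ^ j • v.1) = x ^ j • c.1 + differential l e.1 :=
    congrArg Prod.fst h
  rw [smul_sub, sub_eq_iff_eq_add] at hfst
  exact ⟨c.1 + x ^ j₀ • v.1, e.1, by rw [hfst]; module⟩

theorem exists_forall_mkQ_mem_limitClosurePow {x : R} {l : List R}
    [IsArtinian R (CechCohomology M (x :: l))] {u : M}
    (hu : ∀ n, u ∈ limitClosurePow M (x :: l) n) : ∃ j₀, ∀ j ≥ j₀, ∀ n,
      (Submodule.mkQ _ (x ^ j₀ • u) : QuotSMulTop (x ^ j) M) ∈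
        limitClosurePow (QuotSMulTop (x ^ j) M) l n := by
  obtain ⟨j₀, hj₀⟩ := Cech.exists_pow_smul_mk_eq hu
  refine ⟨j₀, fun j hj n => TopCohomology.mem_limitClosurePow_of_mk_eq_zero ?_⟩
  obtain ⟨a, e, h⟩ := hj₀ j hj n
  have hker := Module.mem_annihilator.1 (QuotSMulTop.mem_annihilator (M := M) (x ^ j))
  have htop := congrArg (TopCohomology.map (Submodule.mkQ _ : M →ₗ[R] QuotSMulTop (x ^ j) M) l ∘
    Cech.toTop l) h
  simpa only [Function.comp_apply, map_smul, map_add, Cech.toTop_differential, Cech.toTop_mk,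
    TopCohomology.map_mk, TopCohomology.smul_eq_zero_of_forall hker, add_zero] using htop

end Descent

/-! ### Vanishing at the top-dimensional primes -/

section LocalVanishing

open scoped Pointwise

variable {R : Type u} [CommRing R]

theorem annihilator_le_annihilator_quotSMulTop (M : Type v) [AddCommGroup M] [Module R M] (x : R) :
    Module.annihilator R M ≤ Module.annihilator R (QuotSMulTop x M) :=
  LinearMap.annihilator_le_of_surjective _ (Submodule.mkQ_surjective _)

theorem powIdeal_cons_one_le_iff {x : R} {l : List R} {p : Ideal R} :
    powIdeal (x :: l) 1 ≤ p ↔ x ∈ p ∧ powIdeal l 1 ≤ p := by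
  rw [powIdeal_cons, pow_one, sup_le_iff, Ideal.span_singleton_le_iff_mem]

theorem exists_isPrime_le_ringKrullDim_quotient {I : Ideal R} {n : ℕ}
    (h : n ≤ ringKrullDim (R ⧸ I)) :
    ∃ q : Ideal R, q.IsPrime ∧ I ≤ q ∧ n ≤ ringKrullDim (R ⧸ q) := by
  rw [ringKrullDim_quotient, Order.le_krullDim_iff] at h
  obtain ⟨s, hs⟩ := h
  refine ⟨s.head.1.asIdeal, s.head.1.isPrime, s.head.2, ?_⟩
  rw [ringKrullDim_quotient, Order.le_krullDim_iff]
  exact ⟨⟨s.length, fun i => ⟨(s i).1, (LTSeries.head_le s i : s.head ≤ s i)⟩, s.step⟩, hs⟩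

variable [IsNoetherianRing R] {M : Type v} [AddCommGroup M] [Module R M] [Module.Finite R M]

/-- Krull's intersection theorem in the localization at `q`. -/
theorem exists_notMem_smul_eq_zero_of_forall_smul_mem {q : Ideal R} [q.IsPrime] {y : R}
    (hy : y ∈ q) {w : M} {j₀ : ℕ} (h : ∀ j ≥ j₀, ∃ s ∉ q, s • w ∈ y ^ j • (⊤ : Submodule R M)) :
    ∃ s ∉ q, s • w = 0 := by
  let A := Localization.AtPrime q
  have : IsNoetherianRing A := IsLocalization.isNoetherianRing q.primeCompl _ inferInstance
  have hbot := Ideal.iInf_pow_smul_eq_bot_of_isLocalRing (M := LocalizedModule q.primeCompl M)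
    (maximalIdeal A) (maximalIdeal.isMaximal A).ne_top
  have hw : (LocalizedModule.mk w 1 : LocalizedModule q.primeCompl M) = 0 := by
    rw [← Submodule.mem_bot A, ← hbot, Submodule.mem_iInf]
    intro i
    obtain ⟨s, hs, v, -, hv⟩ := h (i + j₀) (Nat.le_add_left _ _)
    have hmk : (LocalizedModule.mk w 1 : LocalizedModule q.primeCompl M) =
        algebraMap R A y ^ (i + j₀) • LocalizedModule.mk v ⟨s, hs⟩ := by
      rw [← map_pow, algebraMap_smul, LocalizedModule.smul'_mk, LocalizedModule.mk_eq]
      exact ⟨1, by simpa [Submonoid.smul_def] using hv.symm⟩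
    rw [hmk]
    exact Submodule.smul_mem_smul (Ideal.pow_le_pow_right (Nat.le_add_right i j₀) <|
      Ideal.pow_mem_pow ((IsLocalization.AtPrime.to_map_mem_maximal_iff A q y).2 hy) _) trivial
  rw [← LocalizedModule.zero_mk 1, LocalizedModule.mk_eq] at hw
  obtain ⟨s, hs⟩ := hw
  exact ⟨s, s.2, by simpa [Submonoid.smul_def] using hs⟩

variable [IsLocalRing R]

theorem supportDim_le_length {l : List R} (hl : powIdeal l 1 ≤ maximalIdeal R)
    (h : ∀ p : Ideal R, p.IsPrime → Module.annihilator R M ≤ p → powIdeal l 1 ≤ p →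
      p.IsMaximal) : Module.supportDim R M ≤ l.length := by
  induction l generalizing M with
  | nil =>
    have (p : Module.support R M) : p.1.asIdeal = maximalIdeal R :=
      eq_maximalIdeal (h _ p.1.2 (Module.mem_support_iff_of_finite.1 p.2) (by simp [powIdeal_nil]))
    have : Subsingleton (Module.support R M) :=
      ⟨fun p q => Subtype.ext (PrimeSpectrum.ext ((this p).trans (this q).symm))⟩
    exact Order.krullDim_nonpos_of_subsingleton
  | cons x l ih =>
    rw [powIdeal_cons_one_le_iff] at hl
    have hquot := ih (M := QuotSMulTop x M) hl.2 fun p hp hann hle => h p hp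
      ((annihilator_le_annihilator_quotSMulTop M x).trans hann)
      (powIdeal_cons_one_le_iff.2 ⟨hann (QuotSMulTop.mem_annihilator _ x), hle⟩)
    rw [List.length_cons, Nat.cast_succ]
    exact (Module.supportDim_le_supportDim_quotSMulTop_succ hl.1).trans (by gcongr)

theorem exists_isPrime_lt_ringKrullDim_quotient_eq {q : Ideal R} [q.IsPrime] {x : R}
    (hx : x ∈ maximalIdeal R) (hxq : x ∉ q) {n : ℕ} (hdim : ringKrullDim (R ⧸ q) = n + 1) :
    ∃ q' : Ideal R, q'.IsPrime ∧ q < q' ∧ x ∈ q' ∧ ringKrullDim (R ⧸ q') = n := by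
  have hquot := Module.supportDim_le_supportDim_quotSMulTop_succ (M := R ⧸ q) hx
  rw [Module.supportDim_quotient_eq_ringKrullDim, hdim, ENat.WithBot.add_le_add_one_right_iff,
    Module.supportDim_eq_ringKrullDim_quotient_annihilator] at hquot
  obtain ⟨q', hq', hann, hn⟩ := exists_isPrime_le_ringKrullDim_quotient hquot
  have hlt := lt_of_annihilator_quotSMulTop_le hxq hann
  have hle := (ringKrullDim_quotient_succ_le_of_lt hlt).trans hdim.le
  exact ⟨q', hq', hlt, hann (QuotSMulTop.mem_annihilator _ x),
    (ENat.WithBot.add_le_add_one_right_iff.1 hle).antisymm hn⟩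

theorem notMem_of_ringKrullDim_quotient_eq_length {x : R} {l : List R} {q : Ideal R}
    (hl : powIdeal l 1 ≤ maximalIdeal R)
    (h : ∀ p : Ideal R, p.IsPrime → q ≤ p → powIdeal (x :: l) 1 ≤ p → p.IsMaximal)
    (hdim : ringKrullDim (R ⧸ q) = (x :: l).length) : x ∉ q := fun hxq => by
  have hle : Module.supportDim R (R ⧸ q) ≤ l.length := supportDim_le_length hl fun p hp hann hle =>
    have hqp := Ideal.annihilator_quotient.ge.trans hann
    h p hp hqp (powIdeal_cons_one_le_iff.2 ⟨hqp hxq, hle⟩)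
  rw [Module.supportDim_quotient_eq_ringKrullDim, hdim, Nat.cast_le, List.length_cons] at hle
  exact hle.not_gt l.length.lt_succ_self

/-- The induction passes from `x :: l` and `q` to `l`, the modules `M / x ^ j M`, and a prime `q'`
containing `q + xR` with `dim R/q'` one less; Krull's intersection theorem at `q'` recovers the
statement for `x ^ j₀ • u` from its images in all `M / x ^ j M`, and `x ∉ q`. -/
theorem exists_notMem_smul_eq_zero_of_forall_mem_limitClosurePow {M : Type u} [AddCommGroup M]
    [Module R M] [Module.Finite R M] {l : List R} (hl : powIdeal l 1 ≤ maximalIdeal R)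
    (h : ∀ p : Ideal R, p.IsPrime → Module.annihilator R M ≤ p → powIdeal l 1 ≤ p → p.IsMaximal)
    {q : Ideal R} (hq : q.IsPrime) (hdim : ringKrullDim (R ⧸ q) = l.length) {u : M}
    (hu : ∀ n, u ∈ limitClosurePow M l n) : ∃ s ∉ q, s • u = 0 := by
  induction l generalizing M q with
  | nil =>
    obtain ⟨k, hk⟩ := hu 0
    exact ⟨1, hq.one_notMem, by simpa [powIdeal_nil] using hk⟩
  | cons x l ih =>
    by_cases hann : Module.annihilator R M ≤ q
    swap
    · obtain ⟨s, hs, hsq⟩ := SetLike.not_le_iff_exists.1 hann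
      exact ⟨s, hsq, Module.mem_annihilator.1 hs u⟩
    rw [powIdeal_cons_one_le_iff] at hl
    have hxq := notMem_of_ringKrullDim_quotient_eq_length hl.2
      (fun p hp hqp => h p hp (hann.trans hqp)) hdim
    obtain ⟨q', hq', hlt, hxq', hdim'⟩ :=
      exists_isPrime_lt_ringKrullDim_quotient_eq hl.1 hxq hdim
    have := CechCohomology.isArtinian h
    obtain ⟨j₀, hj₀⟩ := exists_forall_mkQ_mem_limitClosurePow hu
    obtain ⟨s, hs, hs0⟩ := exists_notMem_smul_eq_zero_of_forall_smul_mem (w := x ^ j₀ • u) hxq'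
      fun j hj => by
        obtain ⟨s, hs, hs0⟩ := ih (M := QuotSMulTop (x ^ j) M) hl.2 (fun p hp hle hlp =>
          h p hp ((annihilator_le_annihilator_quotSMulTop M _).trans hle) <|
            powIdeal_cons_one_le_iff.2
              ⟨hp.mem_of_pow_mem j (hle (QuotSMulTop.mem_annihilator _ _)), hlp⟩)
          hq' hdim' (hj₀ j hj)
        rw [← map_smul, Submodule.mkQ_apply, Submodule.Quotient.mk_eq_zero] at hs0
        exact ⟨s, hs, hs0⟩
    refine ⟨s * x ^ j₀, fun hmem => ?_, by rw [mul_smul, hs0]⟩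
    exact (hq.mem_or_mem hmem).elim (fun hsq => hs (hlt.le hsq))
      fun hxj => hxq (hq.mem_of_pow_mem _ hxj)

end LocalVanishing

/-! ### Primary components and limit closures -/

section Components

variable {R : Type u} [CommRing R] {M : Type v} [AddCommGroup M] [Module R M]

theorem powIdeal_ofFn {d : ℕ} (x : Fin d → R) (n : ℕ) :
    powIdeal (List.ofFn x) n = Ideal.span (Set.range fun i => x i ^ n) := by
  rw [powIdeal]
  congr 1
  ext
  simp [List.mem_ofFn]

theorem isSystemOfParametersMod_ofFn [IsLocalRing R] {d : ℕ} {x : Fin d → R} {p : Ideal R} :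
    IsSystemOfParametersMod (List.ofFn x) p ↔ ringKrullDim (R ⧸ p) = d ∧
      (Ideal.span (Set.range x) ⊔ p).radical = maximalIdeal R := by
  simp only [IsSystemOfParametersMod, List.length_ofFn, powIdeal_ofFn, pow_one]

theorem ringKrullDim_quotient_le_of_le {I J : Ideal R} (h : I ≤ J) :
    ringKrullDim (R ⧸ J) ≤ ringKrullDim (R ⧸ I) :=
  ringKrullDim_le_of_surjective (Ideal.Quotient.factor h) (Ideal.Quotient.factor_surjective h)

theorem limitClosure_pow {d : ℕ} (x : Fin d → R) (n : ℕ) :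
    limitClosure (M := M) (fun i => x i ^ (n + 1)) = limitClosurePow M (List.ofFn x) (n + 1) := by
  have hprod (k : ℕ) :
      (∏ i, x i ^ (n + 1)) ^ (k + 1) = (List.ofFn x).prod ^ ((n + 1) * (k + 1)) := by
    rw [List.prod_ofFn, Finset.prod_pow, pow_mul]
  have hspan (k : ℕ) : Ideal.span (Set.range fun i => (x i ^ (n + 1)) ^ (k + 2)) =
      powIdeal (List.ofFn x) (n + 1 + (n + 1) * (k + 1)) := by
    simp only [powIdeal_ofFn, ← pow_mul, show (n + 1) * (k + 2) = n + 1 + (n + 1) * (k + 1) by ring]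
  refine le_antisymm (iSup_le fun k u hu => ?_) ?_
  · rw [Submodule.mem_comap, LinearMap.lsmul_apply, hprod, hspan] at hu
    exact ⟨_, hu⟩
  · rintro u ⟨k, hk⟩
    refine Submodule.mem_iSup_of_mem k ?_
    rw [Submodule.mem_comap, LinearMap.lsmul_apply, hprod, hspan]
    exact prod_pow_smul_mem_of_le hk (by nlinarith)

theorem limitClosurePow_succ_le (l : List R) (n : ℕ) :
    limitClosurePow M l (n + 1) ≤ limitClosurePow M l n := by
  rintro u ⟨k, hk⟩
  refine ⟨k + 1, ?_⟩
  rw [pow_succ', mul_smul, ← add_assoc, add_right_comm]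
  exact Submodule.smul_mem _ _ hk

variable [IsNoetherianRing R]

/-- With `v` spanning a copy of `R/q`, the submodules `N i ⊓ R v` correspond to finitely many ideals
of the domain `R/q` with zero intersection, so one of them is zero. -/
theorem exists_mem_associatedPrimes_quotient {ι : Type*} {S : Set ι} (hS : S.Finite)
    {N : ι → Submodule R M} (hN : ⨅ i ∈ S, N i = ⊥) {q : Ideal R} (hq : q.IsPrime) {v : M}
    (hv : q = (⊥ : Submodule R M).colon {v}) :
    ∃ i ∈ S, v ∉ N i ∧ q ∈ associatedPrimes R (M ⧸ N i) := by
  have hinf : (hS.toFinset.inf fun i => (N i).colon {v}) ≤ q := fun s hs => by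
    simp only [Submodule.mem_finsetInf, Set.Finite.mem_toFinset, Submodule.mem_colon_singleton]
      at hs
    rw [hv, Submodule.mem_colon_singleton, ← hN]
    simpa only [Submodule.mem_iInf] using hs
  obtain ⟨i, hi, hle⟩ := hq.inf_le'.1 hinf
  have hcolon : q = (N i).colon {v} := by
    refine hle.antisymm' ?_
    rw [hv]
    exact Submodule.colon_mono bot_le subset_rfl
  refine ⟨i, hS.mem_toFinset.1 hi, fun hvN => hq.ne_top ?_,
    isAssociatedPrime_iff.2 ⟨hq, Submodule.Quotient.mk v, ?_⟩⟩
  · rw [hcolon, Ideal.eq_top_iff_one, Submodule.mem_colon_singleton, one_smul]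
    exact hvN
  · ext s
    rw [hcolon, Submodule.mem_colon_singleton, Submodule.mem_colon_singleton,
      ← Submodule.Quotient.mk_smul, Submodule.mem_bot, Submodule.Quotient.mk_eq_zero]

theorem mem_of_smul_mem_of_associatedPrimes_eq_singleton {p : Ideal R} {N : Submodule R M}
    (hN : associatedPrimes R (M ⧸ N) = {p}) {s : R} {u : M} (hs : s • u ∈ N) (hsp : s ∉ p) :
    u ∈ N := by
  by_contra hu
  obtain ⟨P, hP : P ∈ associatedPrimes R (M ⧸ N), hle⟩ :=
    exists_le_isAssociatedPrime_of_isNoetherianRing R (Submodule.Quotient.mk u : M ⧸ N)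
      (by rwa [Ne, Submodule.Quotient.mk_eq_zero])
  rw [hN, Set.mem_singleton_iff] at hP
  refine hsp (hP ▸ hle ?_)
  rwa [Submodule.mem_colon_singleton, ← Submodule.Quotient.mk_smul, Submodule.mem_bot,
    Submodule.Quotient.mk_eq_zero]

variable [Module.Finite R M]

theorem exists_mem_associatedPrimes_le {P : Ideal R} [P.IsPrime]
    (hP : Module.annihilator R M ≤ P) : ∃ p ∈ associatedPrimes R M, p ≤ P := by
  obtain ⟨p, hp, hpP⟩ := Ideal.exists_minimalPrimes_le hP
  exact ⟨p, Module.associatedPrimes.minimalPrimes_annihilator_subset_associatedPrimes R M hp, hpP⟩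

theorem not_le_primaryComponent {N : Ideal R → Submodule R M}
    (hprimary : ∀ p ∈ associatedPrimes R M, associatedPrimes R (M ⧸ N p) = {p})
    (hdecomp : ⨅ p ∈ associatedPrimes R M, N p = ⊥) {K : Submodule R M} {q : Ideal R}
    (hq : q ∈ associatedPrimes R K) : ¬ K ≤ N q := fun hK => by
  obtain ⟨hqp, ⟨v, hvK⟩, hv⟩ := isAssociatedPrime_iff.1 hq
  have hv' : q = (⊥ : Submodule R M).colon {v} := by
    ext s
    rw [hv, Submodule.mem_colon_singleton, Submodule.mem_colon_singleton]
    exact Subtype.ext_iff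
  obtain ⟨p, hp, hvp, hass⟩ :=
    exists_mem_associatedPrimes_quotient (associatedPrimes.finite R M) hdecomp hqp hv'
  rw [hprimary p hp, Set.mem_singleton_iff] at hass
  exact hvp (hass ▸ hK hvK)

variable [IsLocalRing R]

theorem mem_of_forall_mem_limitClosurePow {l : List R} {p : Ideal R} (hp : p.IsPrime)
    {N : Submodule R M} (hN : associatedPrimes R (M ⧸ N) = {p})
    (hl : IsSystemOfParametersMod l p) {u : M} (hu : ∀ n, u ∈ limitClosurePow M l (n + 1)) :
    u ∈ N := by
  have := Module.Finite.small.{u} R (M ⧸ N)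
  let e : Shrink.{u} (M ⧸ N) ≃ₗ[R] M ⧸ N := Shrink.linearEquiv R (M ⧸ N)
  have hlm : powIdeal l 1 ≤ maximalIdeal R := hl.2 ▸ le_sup_left.trans Ideal.le_radical
  have hmax (P : Ideal R) (hP : P.IsPrime) (hann : Module.annihilator R (Shrink.{u} (M ⧸ N)) ≤ P)
      (hlP : powIdeal l 1 ≤ P) : P.IsMaximal := by
    rw [e.annihilator_eq] at hann
    obtain ⟨p', hp', hpP⟩ := exists_mem_associatedPrimes_le hann
    rw [hN, Set.mem_singleton_iff] at hp'
    have hle : maximalIdeal R ≤ P := hl.2 ▸ hP.radical_le_iff.2 (sup_le hlP (hp' ▸ hpP))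
    exact (maximalIdeal.isMaximal R).eq_of_le hP.ne_top hle ▸ maximalIdeal.isMaximal R
  obtain ⟨s, hsp, hs⟩ := exists_notMem_smul_eq_zero_of_forall_mem_limitClosurePow hlm hmax hp hl.1
    fun n => map_mem_limitClosurePow (limitClosurePow_succ_le l n (hu n))
      (e.symm.toLinearMap ∘ₗ N.mkQ)
  refine mem_of_smul_mem_of_associatedPrimes_eq_singleton hN ?_ hsp
  rwa [← map_smul, LinearMap.comp_apply, LinearEquiv.coe_coe, e.symm.map_eq_zero_iff,
    Submodule.mkQ_apply, Submodule.Quotient.mk_eq_zero] at hs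

theorem not_isSystemOfParametersMod_of_annihilator_le {l : List R}
    (hd : ringKrullDim (R ⧸ Module.annihilator R M) ≤ l.length)
    (hass : ∀ p ∈ associatedPrimes R M, ¬ IsSystemOfParametersMod l p) {q : Ideal R} [q.IsPrime]
    (hq : Module.annihilator R M ≤ q) : ¬ IsSystemOfParametersMod l q := fun hl => by
  obtain ⟨p, hp, hpq⟩ := exists_mem_associatedPrimes_le hq
  rcases hpq.lt_or_eq with hlt | rfl
  · have := hp.isPrime
    have hann : Module.annihilator R M ≤ p := Submodule.annihilator_top (R := R) (M := M) ▸
      hp.annihilator_le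
    have hle := (ringKrullDim_quotient_succ_le_of_lt hlt).trans
      ((ringKrullDim_quotient_le_of_le hann).trans hd)
    rw [hl.1] at hle
    exact absurd hle (not_le.2 (by exact_mod_cast l.length.lt_succ_self))
  · exact hass p hp hl

theorem limitClosurePow_eq_top [IsPrecomplete (maximalIdeal R) R] {l : List R}
    (hd : ringKrullDim (R ⧸ Module.annihilator R M) ≤ l.length)
    (hass : ∀ p ∈ associatedPrimes R M, ¬ IsSystemOfParametersMod l p) (n : ℕ) :
    limitClosurePow M l n = ⊤ := by
  have := Module.Finite.small.{u} R M
  let e : Shrink.{u} M ≃ₗ[R] M := Shrink.linearEquiv R M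
  obtain ⟨c, hc, hc0⟩ := TopCohomology.exists_notMem_smul_eq_zero (N := Shrink.{u} M)
    (maximalIdeal R) l fun q hq hann => Or.inr <| by
      rw [e.annihilator_eq] at hann
      exact TopCohomology.subsingleton_quotient_of_not_isSystemOfParametersMod l q
        ((ringKrullDim_quotient_le_of_le hann).trans hd)
        (not_isSystemOfParametersMod_of_annihilator_le hd hass hann)
  have hunit : IsUnit c := notMem_maximalIdeal.1 hc
  refine eq_top_iff.2 fun u _ => ?_
  have hmk : TopCohomology.mk l n (e.symm u) = 0 := hunit.smul_eq_zero.1 (hc0 _)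
  simpa using map_mem_limitClosurePow (TopCohomology.mem_limitClosurePow_of_mk_eq_zero hmk)
    e.toLinearMap

end Components

end LimitClosure

open LimitClosure in
theorem intersection_limitClosure_eq_inter_primary_components_general
    {R : Type*} [CommRing R] [IsNoetherianRing R] [IsLocalRing R]
    [IsPrecomplete (maximalIdeal R) R]
    {M : Type*} [AddCommGroup M] [Module R M] [Module.Finite R M]
    {d : ℕ} (hd : moduleDim R M ≤ d) (x : Fin d → R)
    (N : Ideal R → Submodule R M)
    (hprimary : ∀ p ∈ associatedPrimes R M, associatedPrimes R (M ⧸ N p) = {p})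
    (hdecomp : (⨅ p ∈ associatedPrimes R M, N p) = ⊥) :
    (⨅ n : ℕ, limitClosure (M := M) (fun i => x i ^ (n + 1))) =
      ⨅ (p : Ideal R) (_ : p ∈ associatedPrimes R M)
        (_ : ringKrullDim (R ⧸ p) = (d : WithBot ℕ∞))
        (_ : (Ideal.span (Set.range x) ⊔ p).radical = maximalIdeal R), N p := by
  simp only [limitClosure_pow]
  refine le_antisymm (le_iInf₂ fun p hp => le_iInf₂ fun hdim hrad u hu => ?_) ?_
  · exact mem_of_forall_mem_limitClosurePow hp.isPrime (hprimary p hp)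
      (isSystemOfParametersMod_ofFn.2 ⟨hdim, hrad⟩) ((Submodule.mem_iInf _).1 hu)
  · set K : Submodule R M := ⨅ (p : Ideal R) (_ : p ∈ associatedPrimes R M)
      (_ : ringKrullDim (R ⧸ p) = (d : WithBot ℕ∞))
      (_ : (Ideal.span (Set.range x) ⊔ p).radical = maximalIdeal R), N p
    have hann : Module.annihilator R M ≤ Module.annihilator R K :=
      LinearMap.annihilator_le_of_injective K.subtype K.injective_subtype
    have hdim : ringKrullDim (R ⧸ Module.annihilator R K) ≤ (List.ofFn x).length := by
      rw [List.length_ofFn]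
      exact (ringKrullDim_quotient_le_of_le hann).trans hd
    have hass : ∀ q ∈ associatedPrimes R K, ¬ IsSystemOfParametersMod (List.ofFn x) q := by
      refine fun q hq hsop => not_le_primaryComponent hprimary hdecomp hq ?_
      have hqM := associatedPrimes.subset_of_injective K.injective_subtype hq
      obtain ⟨hqd, hrad⟩ := isSystemOfParametersMod_ofFn.1 hsop
      exact (iInf₂_le q hqM).trans (iInf₂_le hqd hrad)
    refine le_iInf fun n u hu => map_mem_limitClosurePow (u := (⟨u, hu⟩ : K)) ?_ K.subtype
    rw [limitClosurePow_eq_top hdim hass]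
    trivial

/-- Let `(R, m)` be a complete Noetherian local ring, `M` a finitely generated `R`-module of
dimension `d`, and `x = x₁, …, x_d` a sequence of `d` elements of `R`.  If
`0 = ⋂_{p ∈ Ass M} N(p)` is a reduced primary decomposition of `0` in `M` (each `N(p)` being
`p`-primary, i.e. `Ass (M/N(p)) = {p}`), then
`⋂_{n ≥ 1} (x₁^n, …, x_d^n)^lim_M = ⋂_{p ∈ J} N(p)`, where `J` is the set of associated
primes `p` of `M` such that the image of `x` is a system of parameters of `R/p` (i.e.
`dim R/p = d` and the ideal generated by `x` together with `p` is primary to `m`). -/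
theorem intersection_limitClosure_eq_inter_primary_components
    {R : Type*} [CommRing R] [IsNoetherianRing R] [IsLocalRing R]
    [IsAdicComplete (maximalIdeal R) R]
    {M : Type*} [AddCommGroup M] [Module R M] [Module.Finite R M]
    {d : ℕ} (hd : moduleDim R M = d) (x : Fin d → R)
    (N : Ideal R → Submodule R M)
    (hprimary : ∀ p ∈ associatedPrimes R M, associatedPrimes R (M ⧸ N p) = {p})
    (hdecomp : (⨅ p ∈ associatedPrimes R M, N p) = ⊥) :
    (⨅ n : ℕ, limitClosure (M := M) (fun i => x i ^ (n + 1))) =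
      ⨅ (p : Ideal R) (_ : p ∈ associatedPrimes R M)
        (_ : ringKrullDim (R ⧸ p) = (d : WithBot ℕ∞))
        (_ : (Ideal.span (Set.range x) ⊔ p).radical = maximalIdeal R), N p :=
  intersection_limitClosure_eq_inter_primary_components_general hd.le x N hprimary hdecomp
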